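/- arXiv:math/9905083 — 2 statements merged into one kernel-verified Lean document; each statement's English description precedes it below -/
import Mathlib

section
/- For every nonnegative integer l, every real t, and every real α ≥ 0, Σ_{n≥0} (t^n/n!) · Σ_{m=0}^{n} α^m · g^O_{n,m,l} = E_{U∈O(l)} det(I + αU) · exp(t·Tr(U)), where g^O_{n,m,l} is the number of involutions of {1,…,n} with exactly m fixed points and longest increasing subsequence of length at most l. -/
open MeasureTheory Matrix

noncomputable section

/-- `lisLE π l` means the longest increasing subsequence of the permutation `π`
has length at most `l`. -/
def lisLE {N : ℕ} (π : Equiv.Perm (Fin N)) (l : ℕ) : Prop :=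
  ∀ (k : ℕ) (f : Fin k → Fin N), StrictMono f → StrictMono (fun i => π (f i)) → k ≤ l

/-- `g^O_{n,m,l}`: the number of involutions of `{1,…,n}` with exactly `m` fixed points
and longest increasing subsequence of length at most `l`. -/
def gOCount (n m l : ℕ) : ℕ :=
  Nat.card {π : Equiv.Perm (Fin n) //
    π * π = 1 ∧ (Finset.univ.filter fun x => π x = x).card = m ∧ lisLE π l}

instance (l : ℕ) : MeasurableSpace (Matrix.orthogonalGroup (Fin l) ℝ) := borel _
instance (l : ℕ) : BorelSpace (Matrix.orthogonalGroup (Fin l) ℝ) := ⟨rfl⟩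

/-- The moments of the standard Gaussian distribution. -/
def gaussMoment (k : ℕ) : ℝ := ∫ x, x ^ k ∂(ProbabilityTheory.gaussianReal 0 1)

lemma integrable_pow_gaussianReal (k : ℕ) :
    Integrable (fun x : ℝ => x ^ k) (ProbabilityTheory.gaussianReal 0 1) := by
  have h := (ProbabilityTheory.memLp_id_gaussianReal (μ := 0) (v := 1) k).integrable_norm_pow'
  refine h.mono' (by fun_prop) (Filter.Eventually.of_forall fun x => ?_)
  simp

lemma integral_gaussianReal_std (f : ℝ → ℝ) :
    ∫ x, f x ∂(ProbabilityTheory.gaussianReal 0 1) =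
      ∫ x, ProbabilityTheory.gaussianPDFReal 0 1 x * f x := by
  simpa using ProbabilityTheory.integral_gaussianReal_eq_integral_smul (μ := 0) (v := 1)
    (f := f) one_ne_zero

lemma integrable_pow_mul_gaussianPDFReal (k : ℕ) :
    Integrable (fun x : ℝ => x ^ k * ProbabilityTheory.gaussianPDFReal 0 1 x) := by
  have h := integrable_pow_gaussianReal k
  rw [ProbabilityTheory.gaussianReal_of_var_ne_zero _ one_ne_zero,
    integrable_withDensity_iff (by fun_prop)
      (by simp [ProbabilityTheory.gaussianPDF])] at h
  simpa [ProbabilityTheory.gaussianPDF, ENNReal.toReal_ofReal,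
    ProbabilityTheory.gaussianPDFReal_nonneg] using h

lemma gaussMoment_zero : gaussMoment 0 = 1 := by simp [gaussMoment]

lemma gaussMoment_one : gaussMoment 1 = 0 := by
  simp [gaussMoment]

lemma hasDerivAt_gaussianPDFReal_std (x : ℝ) :
    HasDerivAt (ProbabilityTheory.gaussianPDFReal 0 1)
      (-(x * ProbabilityTheory.gaussianPDFReal 0 1 x)) x := by
  have h : HasDerivAt (fun x : ℝ => -(x - 0) ^ 2 / (2 * ((1 : NNReal) : ℝ))) (-x) x := by
    have := ((((hasDerivAt_id x).sub_const 0).pow 2).neg).div_const (2 * ((1 : NNReal) : ℝ))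
    refine this.congr_deriv ?_
    simp
    ring
  have := (h.exp.const_mul (√(2 * Real.pi * ((1 : NNReal) : ℝ)))⁻¹)
  unfold ProbabilityTheory.gaussianPDFReal
  refine this.congr_deriv ?_
  ring

lemma gaussMoment_add_two (k : ℕ) : gaussMoment (k + 2) = (k + 1) * gaussMoment k := by
  have key := integral_mul_deriv_eq_deriv_mul_of_integrable
    (u := fun x : ℝ => x ^ (k + 1)) (v := ProbabilityTheory.gaussianPDFReal 0 1)
    (u' := fun x : ℝ => (k + 1) * x ^ k)
    (v' := fun x => -(x * ProbabilityTheory.gaussianPDFReal 0 1 x))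
    (fun x _ => by simpa using hasDerivAt_pow (k + 1) x)
    (fun x _ => hasDerivAt_gaussianPDFReal_std x)
    (by
      refine (integrable_pow_mul_gaussianPDFReal (k + 2)).neg.congr
        (Filter.Eventually.of_forall fun x => ?_)
      simp only [Pi.neg_apply, Pi.mul_apply]; ring)
    (by
      refine ((integrable_pow_mul_gaussianPDFReal k).const_mul (k + 1 : ℝ)).congr
        (Filter.Eventually.of_forall fun x => ?_)
      simp only [Pi.mul_apply]; ring)
    (integrable_pow_mul_gaussianPDFReal (k + 1))
  have e1 : gaussMoment (k + 2) = - ∫ x : ℝ, x ^ (k + 1) *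
      -(x * ProbabilityTheory.gaussianPDFReal 0 1 x) := by
    rw [gaussMoment, integral_gaussianReal_std, ← integral_neg]
    congr 1; ext x; ring
  have e2 : (k + 1) * gaussMoment k = ∫ x : ℝ, (k + 1) * x ^ k *
      ProbabilityTheory.gaussianPDFReal 0 1 x := by
    rw [gaussMoment, integral_gaussianReal_std, ← integral_const_mul]
    congr 1; ext x; ring
  rw [e1, e2, key, neg_neg]

instance : (ProbabilityTheory.gaussianReal 0 1).IsOpenPosMeasure :=
  (ProbabilityTheory.gaussianReal_absolutelyContinuous' 0 one_ne_zero).isOpenPosMeasure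

/-- The tensor attached to a matching `M`: the indicator that a colouring is constant along
the arcs of `M`. -/
def matchingTensor {ι κ : Type*} [Fintype ι] [DecidableEq κ] (M : Equiv.Perm ι) (c : ι → κ) : ℝ :=
  if ∀ k, c (M k) = c k then 1 else 0

/-- The correlation `E ∏_{k ∈ s} g_{a k}` of independent standard Gaussians `g_b`. -/
def gaussCorr {ι β : Type*} [Fintype β] [DecidableEq β] (s : Finset ι) (a : ι → β) : ℝ :=
  ∏ b, gaussMoment (s.filter fun k => a k = b).card

lemma prod_eq_prod_pow_card {ι β : Type*} [Fintype β] [DecidableEq β] (s : Finset ι) (a : ι → β)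
    (g : β → ℝ) : ∏ k ∈ s, g (a k) = ∏ b, g b ^ (s.filter fun k => a k = b).card := by
  rw [← Finset.prod_fiberwise s a]
  refine Finset.prod_congr rfl fun b _ => ?_
  rw [Finset.prod_congr rfl (g := fun _ => g b), Finset.prod_const]
  intro k hk
  rw [(Finset.mem_filter.mp hk).2]

lemma integrable_gauss_prod {ι β : Type*} [Fintype β] [DecidableEq β] (s : Finset ι) (a : ι → β) :
    Integrable (fun g : β → ℝ => ∏ k ∈ s, g (a k))
      (Measure.pi fun _ : β => ProbabilityTheory.gaussianReal 0 1) := by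
  simp_rw [prod_eq_prod_pow_card]
  exact Integrable.fintype_prod (f := fun b (x : ℝ) => x ^ (s.filter fun k => a k = b).card)
    fun b => integrable_pow_gaussianReal _

lemma integral_gauss_prod {ι β : Type*} [Fintype β] [DecidableEq β] (s : Finset ι) (a : ι → β) :
    ∫ g : β → ℝ, ∏ k ∈ s, g (a k)
      ∂(Measure.pi fun _ : β => ProbabilityTheory.gaussianReal 0 1) = gaussCorr s a := by
  simp_rw [prod_eq_prod_pow_card]
  exact integral_fintype_prod_eq_prod
    (f := fun b (x : ℝ) => x ^ (s.filter fun k => a k = b).card)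

lemma gaussCorr_eq_sum {ι β : Type*} [DecidableEq ι] [Fintype β] [DecidableEq β] {s : Finset ι}
    (a : ι → β) {x : ι} (hx : x ∈ s) :
    gaussCorr s a =
      ∑ y ∈ s.erase x, if a y = a x then gaussCorr ((s.erase x).erase y) a else 0 := by
  set R := ∏ b ∈ Finset.univ.erase (a x), gaussMoment (s.filter fun k => a k = b).card with hR
  set q := ((s.erase x).filter fun k => a k = a x).card with hq
  have hL : gaussCorr s a = gaussMoment (q + 1) * R := by
    rw [gaussCorr, ← Finset.mul_prod_erase _ _ (Finset.mem_univ (a x))]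
    congr 2
    rw [hq, Finset.filter_erase, Finset.card_erase_add_one (by simp [hx])]
  have hS : ∀ y ∈ s.erase x, a y = a x →
      gaussCorr ((s.erase x).erase y) a = gaussMoment (q - 1) * R := by
    intro y hy hay
    rw [gaussCorr, ← Finset.mul_prod_erase _ _ (Finset.mem_univ (a x))]
    congr 1
    · rw [hq, Finset.filter_erase, Finset.card_erase_of_mem
        (Finset.mem_filter.mpr ⟨hy, hay⟩)]
    · refine Finset.prod_congr rfl fun b hb => ?_
      have hb' := Finset.ne_of_mem_erase hb
      congr 2
      ext k
      simp only [Finset.mem_filter, Finset.mem_erase]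
      constructor
      · rintro ⟨⟨_, _, h⟩, h'⟩; exact ⟨h, h'⟩
      · rintro ⟨h, h'⟩
        refine ⟨⟨?_, ?_, h⟩, h'⟩
        · rintro rfl; exact hb' (h'.symm.trans hay)
        · rintro rfl; exact hb' h'.symm
  rw [← Finset.sum_filter, Finset.sum_congr rfl (g := fun _ => gaussMoment (q - 1) * R)
    (fun y hy => hS y (Finset.mem_filter.mp hy).1 (Finset.mem_filter.mp hy).2),
    Finset.sum_const, ← hq, hL, nsmul_eq_mul]
  cases q with
  | zero => simp [gaussMoment_one]
  | succ k => rw [gaussMoment_add_two]; push_cast; simp [mul_assoc]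

/-- **Wick's formula**, in qualitative form: Gaussian correlations are combinations of
indicators of perfect matchings. -/
lemma gaussCorr_mem_span {ι β : Type*} [Fintype ι] [DecidableEq ι] [Fintype β] [DecidableEq β]
    (s : Finset ι) :
    (fun a : ι → β => gaussCorr s a) ∈ Submodule.span ℝ
      {f | ∃ M : Equiv.Perm ι, M * M = 1 ∧ (∀ k, M k ≠ k ↔ k ∈ s) ∧ f = matchingTensor M} := by
  induction s using Finset.strongInduction with
  | H s ih =>
    rcases s.eq_empty_or_nonempty with rfl | ⟨x, hx⟩
    · refine Submodule.subset_span ⟨1, one_mul 1, by simp, ?_⟩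
      ext a
      simp [gaussCorr, gaussMoment_zero, matchingTensor]
    · have : (fun a : ι → β => gaussCorr s a) = ∑ y ∈ s.erase x, fun a : ι → β =>
          if a y = a x then gaussCorr ((s.erase x).erase y) a else 0 := by
        ext a
        rw [gaussCorr_eq_sum a hx, Finset.sum_apply]
      rw [this]
      refine Submodule.sum_mem _ fun y hy => ?_
      have hyx := Finset.ne_of_mem_erase hy
      have hys := Finset.mem_of_mem_erase hy
      let L : ((ι → β) → ℝ) →ₗ[ℝ] ((ι → β) → ℝ) :=
        LinearMap.mulLeft ℝ (fun a => if a y = a x then (1 : ℝ) else 0)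
      have hL : (fun a : ι → β => if a y = a x then gaussCorr ((s.erase x).erase y) a else 0) =
          L (fun a => gaussCorr ((s.erase x).erase y) a) := by
        ext a; simp [L]
      rw [hL]
      have hsub : (s.erase x).erase y ⊂ s :=
        (Finset.erase_subset _ _).trans_ssubset (Finset.erase_ssubset hx)
      have h := Submodule.mem_map_of_mem (f := L) (ih _ hsub)
      rw [Submodule.map_span] at h
      refine Submodule.span_mono ?_ h
      rintro _ ⟨_, ⟨M, hM, hs, rfl⟩, rfl⟩
      have hMx : M x = x := by by_contra h; simpa using (hs x).mp h
      have hMy : M y = y := by by_contra h; simpa using (hs y).mp h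
      have hMM : ∀ k, M (M k) = k := fun k => by rw [← Equiv.Perm.mul_apply, hM]; rfl
      have hMne : ∀ k, k ≠ x → k ≠ y → M k ≠ x ∧ M k ≠ y := by
        intro k h1 h2
        exact ⟨fun h => h1 (by rw [← hMM k, h, hMx]), fun h => h2 (by rw [← hMM k, h, hMy])⟩
      have hval : ∀ k, k ≠ x → k ≠ y → (M * Equiv.swap x y) k = M k := by
        intro k h1 h2
        rw [Equiv.Perm.mul_apply, Equiv.swap_apply_of_ne_of_ne h1 h2]
      have hvx : (M * Equiv.swap x y) x = y := by simp [hMy]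
      have hvy : (M * Equiv.swap x y) y = x := by simp [hMx]
      refine ⟨M * Equiv.swap x y, ?_, ?_, ?_⟩
      · ext k
        rw [Equiv.Perm.mul_apply, Equiv.Perm.one_apply]
        by_cases h1 : k = x
        · subst h1; rw [hvx, hvy]
        by_cases h2 : k = y
        · subst h2; rw [hvy, hvx]
        rw [hval k h1 h2, hval _ (hMne k h1 h2).1 (hMne k h1 h2).2, hMM]
      · intro k
        by_cases h1 : k = x
        · subst h1; rw [hvx]; simp [hyx, hx]
        by_cases h2 : k = y
        · subst h2; rw [hvy]; simp [hyx.symm, hys]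
        rw [hval k h1 h2, hs]
        simp [h1, h2]
      · ext a
        simp only [L, LinearMap.mulLeft_apply, Pi.mul_apply, matchingTensor]
        rw [ite_zero_mul_ite_zero, one_mul]
        refine if_congr ?_ rfl rfl
        constructor
        · rintro ⟨h, h'⟩ k
          by_cases h1 : k = x
          · subst h1; rw [hvx, h]
          by_cases h2 : k = y
          · subst h2; rw [hvy, h]
          rw [hval k h1 h2, h']
        · intro h
          have hxy : a y = a x := by rw [← hvx]; exact h x
          refine ⟨hxy, fun k => ?_⟩
          by_cases h1 : k = x
          · rw [h1, hMx]
          by_cases h2 : k = y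
          · rw [h2, hMy]
          rw [← hval k h1 h2]; exact h k

/-- The tensor power of a matrix, acting on functions of colourings. -/
def tensorPow (ι : Type*) {κ : Type*} [Fintype ι] (A : Matrix κ κ ℝ) :
    Matrix (ι → κ) (ι → κ) ℝ :=
  Matrix.of fun c d => ∏ k, A (c k) (d k)

section

variable {ι κ : Type*} [Fintype ι] [DecidableEq ι] [Fintype κ] [DecidableEq κ]

omit [DecidableEq κ] in
lemma tensorPow_mul (A B : Matrix κ κ ℝ) :
    tensorPow ι (A * B) = tensorPow ι A * tensorPow ι B := by
  ext c d
  simp only [tensorPow, Matrix.of_apply, Matrix.mul_apply, ← Finset.prod_mul_distrib]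
  rw [Finset.prod_univ_sum, Fintype.piFinset_univ]

omit [DecidableEq ι] [Fintype κ] in
lemma tensorPow_one : tensorPow ι (1 : Matrix κ κ ℝ) = 1 := by
  ext c d
  simp only [tensorPow, Matrix.of_apply, Matrix.one_apply, Finset.prod_ite_zero]
  simp [funext_iff]

omit [DecidableEq ι] [Fintype κ] [DecidableEq κ] in
lemma tensorPow_transpose (A : Matrix κ κ ℝ) : tensorPow ι Aᵀ = (tensorPow ι A)ᵀ := rfl

lemma dotProduct_tensorPow_nonneg_of_posSemidef {S : Matrix κ κ ℝ} (hS : S.PosSemidef)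
    (v : (ι → κ) → ℝ) : 0 ≤ v ⬝ᵥ tensorPow ι S *ᵥ v := by
  open scoped MatrixOrder in
  obtain ⟨B, rfl⟩ := CStarAlgebra.nonneg_iff_eq_star_mul_self.mp hS.nonneg
  have : star B = Bᵀ := by rw [star_eq_conjTranspose, conjTranspose_eq_transpose_of_trivial]
  rw [this, tensorPow_mul, tensorPow_transpose, ← mulVec_mulVec, dotProduct_mulVec,
    vecMul_transpose]
  exact Finset.sum_nonneg fun i _ => mul_self_nonneg _

lemma exists_polar {A : Matrix κ κ ℝ} (hA : A.det ≠ 0) :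
    ∃ U ∈ Matrix.orthogonalGroup κ ℝ, ∃ S : Matrix κ κ ℝ, S.PosSemidef ∧ A = U * S := by
  open scoped MatrixOrder in
  have hP : (Aᵀ * A).PosSemidef := by
    simpa [conjTranspose_eq_transpose_of_trivial] using posSemidef_conjTranspose_mul_self A
  set S := CFC.sqrt (Aᵀ * A) with hSdef
  have hS : S.PosSemidef := (CFC.sqrt_nonneg (Aᵀ * A)).posSemidef
  have hSS : S * S = Aᵀ * A := CFC.sqrt_mul_sqrt_self _ hP.nonneg
  have hST : Sᵀ = S := by
    simpa [IsHermitian, conjTranspose_eq_transpose_of_trivial] using hS.isHermitian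
  have hdet : IsUnit S.det := by
    rw [isUnit_iff_ne_zero]
    intro h
    have := congrArg Matrix.det hSS
    rw [det_mul, det_mul, det_transpose, h, mul_zero] at this
    exact hA (mul_self_eq_zero.mp this.symm)
  refine ⟨A * S⁻¹, ?_, S, hS, ?_⟩
  · rw [Matrix.mem_orthogonalGroup_iff', transpose_mul, transpose_nonsing_inv, hST,
      Matrix.mul_assoc, ← Matrix.mul_assoc Aᵀ, ← hSS, Matrix.mul_assoc, mul_nonsing_inv _ hdet,
      Matrix.mul_one, nonsing_inv_mul _ hdet]
  · rw [Matrix.mul_assoc, nonsing_inv_mul _ hdet, Matrix.mul_one]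

omit [DecidableEq κ] in
lemma continuous_dotProduct_tensorPow (v : (ι → κ) → ℝ) :
    Continuous fun A : Matrix κ κ ℝ => v ⬝ᵥ tensorPow ι A *ᵥ v := by
  simp only [dotProduct, mulVec, tensorPow, Matrix.of_apply]
  fun_prop

lemma dotProduct_tensorPow_nonneg {v : (ι → κ) → ℝ}
    (hv : ∀ U ∈ Matrix.orthogonalGroup κ ℝ, tensorPow ι U *ᵥ v = v) (A : Matrix κ κ ℝ) :
    0 ≤ v ⬝ᵥ tensorPow ι A *ᵥ v := by
  have key : ∀ A : Matrix κ κ ℝ, A.det ≠ 0 → 0 ≤ v ⬝ᵥ tensorPow ι A *ᵥ v := by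
    intro A hA
    obtain ⟨U, hU, S, hS, rfl⟩ := exists_polar hA
    have hUt : Uᵀ ∈ Matrix.orthogonalGroup κ ℝ := by
      have := Unitary.star_mem hU
      rwa [star_eq_conjTranspose, conjTranspose_eq_transpose_of_trivial] at this
    have := hv _ hUt
    rw [tensorPow_mul, ← mulVec_mulVec, dotProduct_mulVec, ← mulVec_transpose,
      ← tensorPow_transpose, this]
    exact dotProduct_tensorPow_nonneg_of_posSemidef hS v
  have hcont : Continuous fun ε : ℝ => v ⬝ᵥ tensorPow ι (A + ε • (1 : Matrix κ κ ℝ)) *ᵥ v :=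
    (continuous_dotProduct_tensorPow v).comp (by fun_prop)
  have hlim : Filter.Tendsto (fun ε : ℝ => v ⬝ᵥ tensorPow ι (A + ε • (1 : Matrix κ κ ℝ)) *ᵥ v)
      (nhdsWithin 0 {0}ᶜ) (nhds (v ⬝ᵥ tensorPow ι A *ᵥ v)) := by
    have := (hcont.tendsto 0).mono_left (nhdsWithin_le_nhds (s := {0}ᶜ))
    simpa using this
  refine ge_of_tendsto hlim ?_
  have hfin : {ε : ℝ | (A + ε • (1 : Matrix κ κ ℝ)).det = 0}.Finite := by
    refine ((-A).charpoly.roots.toFinset.finite_toSet).subset fun ε hε => ?_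
    simp only [Finset.mem_coe, Multiset.mem_toFinset]
    rw [Polynomial.mem_roots (charpoly_monic _).ne_zero, Polynomial.IsRoot, eval_charpoly,
      scalar_apply, ← smul_one_eq_diagonal, sub_neg_eq_add, add_comm]
    exact hε
  have h0 := (hfin.subset Set.sdiff_subset :
    ({ε : ℝ | (A + ε • (1 : Matrix κ κ ℝ)).det = 0} \ {0}).Finite).isClosed.isOpen_compl
  filter_upwards [nhdsWithin_le_nhds (h0.mem_nhds (by simp)), self_mem_nhdsWithin] with ε h1 h2
  exact key _ fun h => h1 ⟨h, h2⟩

/-- An orthogonally invariant tensor which is orthogonal to all perfect matchings vanishes. -/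
lemma eq_zero_of_orthogonal_matchings {v : (ι → κ) → ℝ}
    (hv : ∀ U ∈ Matrix.orthogonalGroup κ ℝ, tensorPow ι U *ᵥ v = v)
    (h : ∀ M : Equiv.Perm ι, M * M = 1 → (∀ k, M k ≠ k) → v ⬝ᵥ matchingTensor M = 0) :
    v = 0 := by
  set γ : Measure (κ × κ → ℝ) := Measure.pi fun _ => ProbabilityTheory.gaussianReal 0 1
  let mat : (κ × κ → ℝ) → Matrix κ κ ℝ := fun g => Matrix.of fun i j => g (i, j)
  have hmat : Continuous mat := by
    refine continuous_matrix fun i j => ?_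
    exact continuous_apply (i, j)
  let Λ : ((ι → κ × κ) → ℝ) →ₗ[ℝ] ℝ :=
    { toFun := fun f => ∑ c : ι → κ, ∑ d : ι → κ, v c * v d * f fun k => (c k, d k)
      map_add' := fun f g => by simp [mul_add, Finset.sum_add_distrib]
      map_smul' := fun r f => by
        simp only [Pi.smul_apply, smul_eq_mul, RingHom.id_apply, Finset.mul_sum]
        refine Finset.sum_congr rfl fun c _ => Finset.sum_congr rfl fun d _ => by ring }
  have hΛ : Λ (fun a => gaussCorr Finset.univ a) = 0 := by
    have hle : Submodule.span ℝ {f : (ι → κ × κ) → ℝ | ∃ M : Equiv.Perm ι, M * M = 1 ∧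
        (∀ k, M k ≠ k ↔ k ∈ Finset.univ) ∧ f = matchingTensor M} ≤ LinearMap.ker Λ := by
      rw [Submodule.span_le]
      rintro _ ⟨M, hM, hk, rfl⟩
      have hprod : ∀ c d : ι → κ, matchingTensor M (fun k => (c k, d k)) =
          matchingTensor M c * matchingTensor M d := by
        intro c d
        simp only [matchingTensor, ite_zero_mul_ite_zero, one_mul, Prod.mk.injEq, forall_and]
      have : Λ (matchingTensor M) = (v ⬝ᵥ matchingTensor M) * (v ⬝ᵥ matchingTensor M) := by
        simp only [Λ, LinearMap.coe_mk, AddHom.coe_mk, hprod, dotProduct, Finset.sum_mul_sum]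
        refine Finset.sum_congr rfl fun c _ => Finset.sum_congr rfl fun d _ => by ring
      simp only [SetLike.mem_coe, LinearMap.mem_ker]
      rw [this, h M hM fun k => (hk k).mpr (Finset.mem_univ k), zero_mul]
    exact hle (gaussCorr_mem_span Finset.univ)
  have hexp : ∀ g : κ × κ → ℝ, v ⬝ᵥ tensorPow ι (mat g) *ᵥ v =
      ∑ c : ι → κ, ∑ d : ι → κ, v c * v d * ∏ k, g (c k, d k) := by
    intro g
    simp only [dotProduct, mulVec, tensorPow, Matrix.of_apply, mat, Finset.mul_sum]
    refine Finset.sum_congr rfl fun c _ => Finset.sum_congr rfl fun d _ => by ring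
  have hint : ∀ c d : ι → κ, Integrable (fun g : κ × κ → ℝ => v c * v d * ∏ k, g (c k, d k)) γ :=
    fun c d => (integrable_gauss_prod Finset.univ fun k => (c k, d k)).const_mul _
  have hzero : ∫ g, v ⬝ᵥ tensorPow ι (mat g) *ᵥ v ∂γ = 0 := by
    simp_rw [hexp]
    rw [← hΛ, integral_finsetSum _ fun c _ => integrable_finsetSum _ fun d _ => hint c d]
    refine Finset.sum_congr rfl fun c _ => ?_
    rw [integral_finsetSum _ fun d _ => hint c d]
    refine Finset.sum_congr rfl fun d _ => ?_
    rw [integral_const_mul, integral_gauss_prod Finset.univ fun k => (c k, d k)]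
  have hcont : Continuous fun g => v ⬝ᵥ tensorPow ι (mat g) *ᵥ v :=
    (continuous_dotProduct_tensorPow v).comp hmat
  have hae := (integral_eq_zero_iff_of_nonneg (μ := γ)
    (fun g => dotProduct_tensorPow_nonneg hv (mat g)) (by
      simp_rw [hexp]
      exact integrable_finsetSum _ fun c _ => integrable_finsetSum _ fun d _ => hint c d)).mp hzero
  have hall := (Continuous.ae_eq_iff_eq γ hcont continuous_zero).mp hae
  have h1 := congrFun hall fun p => (1 : Matrix κ κ ℝ) p.1 p.2
  have hm1 : mat (fun p => (1 : Matrix κ κ ℝ) p.1 p.2) = 1 := by ext i j; rfl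
  simp only [hm1, tensorPow_one, one_mulVec, Pi.zero_apply] at h1
  exact dotProduct_self_eq_zero.mp h1

end

section

variable {ι κ : Type*} [Fintype ι] [DecidableEq ι] [Fintype κ] [DecidableEq κ]

lemma tensorPow_mulVec_matchingTensor {U : Matrix κ κ ℝ} (hU : U ∈ Matrix.orthogonalGroup κ ℝ)
    {M : Equiv.Perm ι} (hM : M * M = 1) (hfix : ∀ k, M k ≠ k) :
    tensorPow ι U *ᵥ matchingTensor M = matchingTensor M := by
  have hMM : ∀ k, M (M k) = k := fun k => by rw [← Equiv.Perm.mul_apply, hM]; rfl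
  let e := Fintype.equivFin ι
  let ρ := {k : ι // e k < e (M k)}
  have hbij : Function.Bijective (Sum.elim (fun k : ρ => (k : ι)) fun k : ρ => M k) := by
    constructor
    · rintro (⟨x, hx⟩ | ⟨x, hx⟩) (⟨y, hy⟩ | ⟨y, hy⟩) h
      · exact congrArg Sum.inl (Subtype.ext h)
      · simp only [Sum.elim_inl, Sum.elim_inr] at h
        subst h
        rw [hMM] at hx
        exact absurd hx hy.asymm
      · simp only [Sum.elim_inl, Sum.elim_inr] at h
        subst h
        rw [hMM] at hy
        exact absurd hx hy.asymm
      · exact congrArg Sum.inr (Subtype.ext (M.injective h))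
    · intro k
      rcases lt_trichotomy (e k) (e (M k)) with h | h | h
      · exact ⟨Sum.inl ⟨k, h⟩, rfl⟩
      · exact absurd (e.injective h).symm (hfix k)
      · exact ⟨Sum.inr ⟨M k, by rwa [hMM]⟩, hMM k⟩
  let E : ρ ⊕ ρ ≃ ι := Equiv.ofBijective _ hbij
  let Φ : (ρ → κ) × (ρ → κ) ≃ (ι → κ) :=
    (Equiv.sumArrowEquivProdArrow ρ ρ κ).symm.trans (Equiv.arrowCongr E (Equiv.refl κ))
  have hΦl : ∀ p (k : ρ), Φ p k = p.1 k := by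
    intro p k
    have : Φ p (E (Sum.inl k)) = p.1 k := by
      simp [Φ, Equiv.arrowCongr, Equiv.sumArrowEquivProdArrow]
    exact this
  have hΦr : ∀ p (k : ρ), Φ p (M k) = p.2 k := by
    intro p k
    have : Φ p (E (Sum.inr k)) = p.2 k := by
      simp [Φ, Equiv.arrowCongr, Equiv.sumArrowEquivProdArrow]
    exact this
  have hχ : ∀ p, matchingTensor M (Φ p) = if p.1 = p.2 then 1 else 0 := by
    intro p
    refine if_congr ⟨fun h => ?_, fun h => ?_⟩ rfl rfl
    · ext k
      rw [← hΦl p k, ← hΦr p k, h]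
    · intro k
      obtain ⟨k | k, rfl⟩ := E.surjective k
      · change Φ p (M k) = Φ p k
        rw [hΦl, hΦr, h]
      · change Φ p (M (M k)) = Φ p (M k)
        rw [hMM, hΦl, hΦr, h]
  have hprod : ∀ p q, tensorPow ι U (Φ p) (Φ q) =
      tensorPow ρ U p.1 q.1 * tensorPow ρ U p.2 q.2 := by
    intro p q
    simp only [tensorPow, Matrix.of_apply]
    rw [← E.prod_comp, Fintype.prod_sum_type]
    congr 1
    · refine Finset.prod_congr rfl fun k _ => ?_
      change U (Φ p k) (Φ q k) = _
      rw [hΦl, hΦl]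
    · refine Finset.prod_congr rfl fun k _ => ?_
      change U (Φ p (M k)) (Φ q (M k)) = _
      rw [hΦr, hΦr]
  ext c
  obtain ⟨p, rfl⟩ := Φ.surjective c
  rw [mulVec, dotProduct, ← Φ.sum_comp, hχ, Fintype.sum_prod_type]
  simp only [hχ, hprod, mul_ite, mul_one, mul_zero, Finset.sum_ite_eq, Finset.mem_univ, if_true]
  have h1 : tensorPow ρ U * (tensorPow ρ U)ᵀ = 1 := by
    rw [← tensorPow_transpose, ← tensorPow_mul, ← tensorPow_one]
    congr 1
    exact (Matrix.mem_orthogonalGroup_iff κ ℝ).mp hU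
  have := congrFun (congrFun h1 p.1) p.2
  rw [Matrix.mul_apply, Matrix.one_apply] at this
  exact this

lemma exists_mem_sub_orthogonal {σ : Type*} [Fintype σ] (W : Submodule ℝ (σ → ℝ)) (v : σ → ℝ) :
    ∃ w ∈ W, ∀ u ∈ W, (v - w) ⬝ᵥ u = 0 := by
  let L := WithLp.linearEquiv 2 ℝ (σ → ℝ)
  let W' : Submodule ℝ (EuclideanSpace ℝ σ) := W.comap L.toLinearMap
  refine ⟨L (W'.starProjection (WithLp.toLp 2 v)),
    W'.starProjection_apply_mem (WithLp.toLp 2 v), fun u hu => ?_⟩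
  have h := W'.sub_starProjection_mem_orthogonal (WithLp.toLp 2 v)
  have := (Submodule.mem_orthogonal _ _).mp h (WithLp.toLp 2 u) hu
  rw [EuclideanSpace.inner_eq_star_dotProduct] at this
  exact this

/-- The first fundamental theorem of invariant theory for the orthogonal group. -/
lemma mem_span_matchingTensor {v : (ι → κ) → ℝ}
    (hv : ∀ U ∈ Matrix.orthogonalGroup κ ℝ, tensorPow ι U *ᵥ v = v) :
    v ∈ Submodule.span ℝ {f : (ι → κ) → ℝ |
      ∃ M : Equiv.Perm ι, M * M = 1 ∧ (∀ k, M k ≠ k) ∧ f = matchingTensor M} := by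
  set W := Submodule.span ℝ {f : (ι → κ) → ℝ |
      ∃ M : Equiv.Perm ι, M * M = 1 ∧ (∀ k, M k ≠ k) ∧ f = matchingTensor M} with hW
  obtain ⟨w, hw, horth⟩ := exists_mem_sub_orthogonal W v
  have hwinv : ∀ U ∈ Matrix.orthogonalGroup κ ℝ, tensorPow ι U *ᵥ w = w := by
    intro U hU
    have hle : W ≤ LinearMap.eqLocus (tensorPow ι U).mulVecLin LinearMap.id := by
      rw [hW, Submodule.span_le]
      rintro _ ⟨M, hM, hk, rfl⟩
      exact tensorPow_mulVec_matchingTensor hU hM hk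
    exact hle hw
  have h0 : v - w = 0 := by
    refine eq_zero_of_orthogonal_matchings (fun U hU => ?_) fun M hM hk => ?_
    · rw [mulVec_sub, hv U hU, hwinv U hU]
    · exact horth _ (Submodule.subset_span ⟨M, hM, hk, rfl⟩)
  rwa [sub_eq_zero.mp h0]

end

/-- The permutation of `Fin n ⊕ Fin m` acting by `τ` on the second summand. -/
abbrev permInr (n : ℕ) {m : ℕ} (τ : Equiv.Perm (Fin m)) : Equiv.Perm (Fin n ⊕ Fin m) :=
  Equiv.Perm.sumCongr 1 τ

/-- Antisymmetrization of a tensor in the slots indexed by the second summand. -/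
def altSum (n m : ℕ) (κ : Type*) :
    (((Fin n ⊕ Fin m) → κ) → ℝ) →ₗ[ℝ] (((Fin n ⊕ Fin m) → κ) → ℝ) :=
  (Nat.factorial m : ℝ)⁻¹ • ∑ τ : Equiv.Perm (Fin m),
    ((Equiv.Perm.sign τ : ℤ) : ℝ) • LinearMap.funLeft ℝ ℝ fun c => c ∘ permInr n τ

section

variable {n m : ℕ} {κ : Type*}

lemma altSum_apply (f : ((Fin n ⊕ Fin m) → κ) → ℝ) (c : (Fin n ⊕ Fin m) → κ) :
    altSum n m κ f c = (Nat.factorial m : ℝ)⁻¹ * ∑ τ : Equiv.Perm (Fin m),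
      ((Equiv.Perm.sign τ : ℤ) : ℝ) * f (c ∘ permInr n τ) := by
  simp [altSum, LinearMap.sum_apply, Finset.sum_apply, LinearMap.funLeft_apply]

lemma permInr_mul (σ τ : Equiv.Perm (Fin m)) : permInr n (σ * τ) = permInr n σ * permInr n τ := by
  simp [permInr]

lemma sign_cast_mul (σ τ : Equiv.Perm (Fin m)) : ((Equiv.Perm.sign (σ * τ) : ℤ) : ℝ) =
    ((Equiv.Perm.sign σ : ℤ) : ℝ) * ((Equiv.Perm.sign τ : ℤ) : ℝ) := by
  rw [Equiv.Perm.sign_mul]; push_cast; rfl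

lemma sign_cast_mul_self {α : Type*} [Fintype α] [DecidableEq α] (σ : Equiv.Perm α) :
    ((Equiv.Perm.sign σ : ℤ) : ℝ) * ((Equiv.Perm.sign σ : ℤ) : ℝ) = 1 := by
  rcases Int.units_eq_one_or (Equiv.Perm.sign σ) with h | h <;> simp [h]

lemma altSum_comp (σ : Equiv.Perm (Fin m)) (f : ((Fin n ⊕ Fin m) → κ) → ℝ) :
    altSum n m κ (fun c => f (c ∘ permInr n σ)) =
      ((Equiv.Perm.sign σ : ℤ) : ℝ) • altSum n m κ f := by
  ext c
  rw [Pi.smul_apply, altSum_apply, altSum_apply, smul_eq_mul, mul_left_comm]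
  congr 1
  rw [Finset.mul_sum, ← Equiv.sum_comp (Equiv.mulRight σ) (fun τ => ((Equiv.Perm.sign σ : ℤ) : ℝ) *
    (((Equiv.Perm.sign τ : ℤ) : ℝ) * f (c ∘ permInr n τ)))]
  refine Finset.sum_congr rfl fun τ _ => ?_
  rw [Equiv.coe_mulRight, sign_cast_mul, permInr_mul, Equiv.Perm.coe_mul, ← Function.comp_assoc,
    mul_left_comm, mul_assoc, ← mul_assoc (((Equiv.Perm.sign σ : ℤ) : ℝ)),
    sign_cast_mul_self, one_mul]

lemma altSum_apply_comp (σ : Equiv.Perm (Fin m)) (f : ((Fin n ⊕ Fin m) → κ) → ℝ)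
    (c : (Fin n ⊕ Fin m) → κ) :
    altSum n m κ f (c ∘ permInr n σ) = ((Equiv.Perm.sign σ : ℤ) : ℝ) * altSum n m κ f c := by
  rw [altSum_apply, altSum_apply, mul_left_comm]
  congr 1
  rw [Finset.mul_sum, ← Equiv.sum_comp (Equiv.mulLeft σ) (fun τ => ((Equiv.Perm.sign σ : ℤ) : ℝ) *
    (((Equiv.Perm.sign τ : ℤ) : ℝ) * f (c ∘ permInr n τ)))]
  refine Finset.sum_congr rfl fun τ _ => ?_
  rw [Equiv.coe_mulLeft, sign_cast_mul, permInr_mul, Equiv.Perm.coe_mul, ← Function.comp_assoc,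
    ← mul_assoc, ← mul_assoc, sign_cast_mul_self, one_mul]

lemma altSum_altSum (f : ((Fin n ⊕ Fin m) → κ) → ℝ) :
    altSum n m κ (altSum n m κ f) = altSum n m κ f := by
  ext c
  rw [altSum_apply]
  simp only [altSum_apply_comp, ← mul_assoc, sign_cast_mul_self, one_mul]
  rw [Finset.sum_const, Finset.card_univ, Fintype.card_perm, Fintype.card_fin, nsmul_eq_mul,
    ← mul_assoc, inv_mul_cancel₀ (by exact_mod_cast Nat.factorial_ne_zero m), one_mul]

lemma altSum_mulVec [Fintype κ] {A : Matrix ((Fin n ⊕ Fin m) → κ) ((Fin n ⊕ Fin m) → κ) ℝ}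
    (hA : ∀ (τ : Equiv.Perm (Fin m)) c d, A (c ∘ permInr n τ) (d ∘ permInr n τ) = A c d)
    (v : ((Fin n ⊕ Fin m) → κ) → ℝ) : altSum n m κ (A *ᵥ v) = A *ᵥ altSum n m κ v := by
  ext c
  have h : ∀ τ : Equiv.Perm (Fin m), (A *ᵥ v) (c ∘ permInr n τ) =
      (A *ᵥ fun d => v (d ∘ permInr n τ)) c := by
    intro τ
    simp only [mulVec, dotProduct]
    rw [← (Equiv.arrowCongr (permInr n τ).symm (Equiv.refl κ)).sum_comp]
    refine Finset.sum_congr rfl fun d _ => ?_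
    have : (Equiv.arrowCongr (permInr n τ).symm (Equiv.refl κ)) d = d ∘ permInr n τ := rfl
    rw [this, hA]
  rw [altSum_apply]
  simp only [h]
  simp only [mulVec, dotProduct, altSum_apply, Finset.mul_sum]
  rw [Finset.sum_comm]
  refine Finset.sum_congr rfl fun d _ => Finset.sum_congr rfl fun τ _ => by ring

end

lemma tensorPow_comp {ι κ : Type*} [Fintype ι] (σ : Equiv.Perm ι) (A : Matrix κ κ ℝ)
    (c d : ι → κ) : tensorPow ι A (c ∘ σ) (d ∘ σ) = tensorPow ι A c d :=
  Equiv.prod_comp σ fun k => A (c k) (d k)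

lemma matchingTensor_comp {ι κ : Type*} [Fintype ι] [DecidableEq κ] (M σ : Equiv.Perm ι)
    (c : ι → κ) : matchingTensor M (c ∘ σ) = matchingTensor (σ * M * σ⁻¹) c := by
  refine if_congr ⟨fun h k => ?_, fun h k => ?_⟩ rfl rfl
  · simpa using h (σ⁻¹ k)
  · simpa using h (σ k)

/-- The vanishing of antisymmetrizers over more slots than there are colours. -/
lemma sum_sign_comp_eq_zero {ι κ : Type*} [Fintype ι] [DecidableEq ι] [Fintype κ]
    (I : Finset ι) (hI : Fintype.card κ < I.card) (f : (ι → κ) → ℝ) (c : ι → κ) :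
    ∑ σ : Equiv.Perm ι with ∀ k, k ∉ I → σ k = k,
      ((Equiv.Perm.sign σ : ℤ) : ℝ) * f (c ∘ σ) = 0 := by
  obtain ⟨x, hx, y, hy, hxy, hc⟩ := Finset.exists_ne_map_eq_of_card_lt_of_maps_to
    (s := I) (t := Finset.univ) (by simpa using hI) (f := c) (fun _ _ => Finset.mem_univ _)
  refine Finset.sum_involution (fun σ _ => Equiv.swap x y * σ) ?_ ?_ ?_ ?_
  · intro σ _
    have : c ∘ (Equiv.swap x y * σ : Equiv.Perm ι) = c ∘ σ := by
      ext k
      simp only [Function.comp_apply, Equiv.Perm.mul_apply, Equiv.swap_apply_def]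
      split_ifs with h1 h2
      · rw [h1, hc]
      · rw [h2, hc]
      · rfl
    rw [this, Equiv.Perm.sign_mul, Equiv.Perm.sign_swap hxy]
    simp
  · intro σ _ _ h
    have := congrArg Equiv.Perm.sign h
    rw [Equiv.Perm.sign_mul, Equiv.Perm.sign_swap hxy] at this
    rcases Int.units_eq_one_or (Equiv.Perm.sign σ) with h | h <;> rw [h] at this <;>
      exact absurd this (by decide)
  · intro σ hσ
    simp only [Finset.mem_filter, Finset.mem_univ, true_and] at hσ ⊢
    intro k hk
    rw [Equiv.Perm.mul_apply, hσ k hk, Equiv.swap_apply_of_ne_of_ne]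
    · rintro rfl; exact hk hx
    · rintro rfl; exact hk hy
  · intro σ _
    simp

/-- The antisymmetrized matching tensor. -/
def altMatching {n m : ℕ} (κ : Type*) [DecidableEq κ] (M : Equiv.Perm (Fin n ⊕ Fin m)) :
    ((Fin n ⊕ Fin m) → κ) → ℝ :=
  altSum n m κ (matchingTensor M)

lemma altMatching_conj {n m : ℕ} {κ : Type*} [DecidableEq κ] (M : Equiv.Perm (Fin n ⊕ Fin m))
    (τ : Equiv.Perm (Fin m)) :
    altMatching κ (permInr n τ * M * (permInr n τ)⁻¹) =
      ((Equiv.Perm.sign τ : ℤ) : ℝ) • altMatching κ M := by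
  rw [altMatching, altMatching, ← altSum_comp]
  congr 1
  ext c
  rw [matchingTensor_comp]

/-- The orthogonally invariant tensors which are antisymmetric in the last `m` slots. -/
def altInvariants (n m : ℕ) (κ : Type*) [Fintype κ] [DecidableEq κ] :
    Submodule ℝ (((Fin n ⊕ Fin m) → κ) → ℝ) where
  carrier := {v | (∀ U ∈ Matrix.orthogonalGroup κ ℝ, tensorPow _ U *ᵥ v = v) ∧
    altSum n m κ v = v}
  zero_mem' := ⟨fun U _ => mulVec_zero _, map_zero _⟩
  add_mem' := fun {v w} hv hw =>
    ⟨fun U hU => by rw [mulVec_add, hv.1 U hU, hw.1 U hU], by rw [map_add, hv.2, hw.2]⟩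
  smul_mem' := fun r v hv =>
    ⟨fun U hU => by rw [mulVec_smul, hv.1 U hU], by rw [map_smul, hv.2]⟩

lemma altInvariants_eq_span (n m : ℕ) (κ : Type*) [Fintype κ] [DecidableEq κ] :
    altInvariants n m κ = Submodule.span ℝ {f | ∃ M : Equiv.Perm (Fin n ⊕ Fin m),
      M * M = 1 ∧ (∀ k, M k ≠ k) ∧ f = altMatching κ M} := by
  refine le_antisymm (fun v hv => ?_) (Submodule.span_le.mpr ?_)
  · have h := Submodule.mem_map_of_mem (f := altSum n m κ) (mem_span_matchingTensor hv.1)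
    rw [hv.2, Submodule.map_span] at h
    refine Submodule.span_mono ?_ h
    rintro _ ⟨_, ⟨M, hM, hk, rfl⟩, rfl⟩
    exact ⟨M, hM, hk, rfl⟩
  · rintro _ ⟨M, hM, hk, rfl⟩
    refine ⟨fun U hU => ?_, altSum_altSum _⟩
    rw [altMatching, ← altSum_mulVec fun τ => tensorPow_comp _ _,
      tensorPow_mulVec_matchingTensor hU hM hk]

/-- The involution of `Fin n` induced by a matching of `Fin n ⊕ Fin m`: points matched with the
second summand become fixed points. -/
def arcMap {n m : ℕ} (M : Equiv.Perm (Fin n ⊕ Fin m)) (x : Fin n) : Fin n :=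
  Sum.elim id (fun _ => x) (M (Sum.inl x))

/-- Fixed-point-free involutions, that is, perfect matchings. -/
def IsMatching {ι : Type*} (M : Equiv.Perm ι) : Prop := M * M = 1 ∧ ∀ k, M k ≠ k

/-- Matchings of `Fin n ⊕ Fin m` without arcs inside the second summand. -/
def IsBipartialMatching {n m : ℕ} (M : Equiv.Perm (Fin n ⊕ Fin m)) : Prop :=
  IsMatching M ∧ ∀ j j', M (Sum.inr j) ≠ Sum.inr j'

lemma IsMatching.apply_apply {ι : Type*} {M : Equiv.Perm ι} (hM : IsMatching M) (k : ι) :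
    M (M k) = k := by
  rw [← Equiv.Perm.mul_apply, hM.1, Equiv.Perm.one_apply]

section

variable {n m : ℕ} {M : Equiv.Perm (Fin n ⊕ Fin m)}

lemma arcMap_of_inl {x y : Fin n} (h : M (Sum.inl x) = Sum.inl y) : arcMap M x = y := by
  simp [arcMap, h]

lemma arcMap_of_inr {x : Fin n} {j : Fin m} (h : M (Sum.inl x) = Sum.inr j) :
    arcMap M x = x := by
  simp [arcMap, h]

lemma IsMatching.arcMap_eq_self_iff (hM : IsMatching M) (x : Fin n) :
    arcMap M x = x ↔ ∃ j, M (Sum.inl x) = Sum.inr j := by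
  rcases h : M (Sum.inl x) with y | j
  · rw [arcMap_of_inl h]
    refine ⟨fun hyx => ?_, fun ⟨j, hj⟩ => by simp at hj⟩
    rw [hyx] at h
    exact absurd h (hM.2 _)
  · simp [arcMap_of_inr h]

lemma IsMatching.apply_inl_of_ne (x : Fin n) (h : arcMap M x ≠ x) :
    M (Sum.inl x) = Sum.inl (arcMap M x) := by
  rcases h' : M (Sum.inl x) with y | j
  · rw [arcMap_of_inl h']
  · exact absurd (arcMap_of_inr h') h

lemma IsMatching.arcMap_arcMap (hM : IsMatching M) (x : Fin n) : arcMap M (arcMap M x) = x := by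
  rcases h : M (Sum.inl x) with y | j
  · rw [arcMap_of_inl h, arcMap_of_inl (y := x) (by rw [← h, hM.apply_apply])]
  · rw [arcMap_of_inr h, arcMap_of_inr h]

lemma IsBipartialMatching.exists_inl (hM : IsBipartialMatching M) (j : Fin m) :
    ∃ x, M (Sum.inr j) = Sum.inl x := by
  rcases h : M (Sum.inr j) with x | j'
  · exact ⟨x, rfl⟩
  · exact absurd h (hM.2 _ _)

lemma altMatching_eq_zero {κ : Type*} [DecidableEq κ] (hM : IsMatching M) {j j' : Fin m}
    (h : M (Sum.inr j) = Sum.inr j') : altMatching κ M = 0 := by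
  have hne : j ≠ j' := fun hj => hM.2 (Sum.inr j) (by rw [h, hj])
  have h' : M (Sum.inr j') = Sum.inr j := by rw [← h, hM.apply_apply]
  have hconj := altMatching_conj (κ := κ) M (Equiv.swap j j')
  have : permInr n (Equiv.swap j j') * M * (permInr n (Equiv.swap j j'))⁻¹ = M := by
    rw [permInr, Equiv.Perm.sumCongr_one_swap, Equiv.swap_inv, mul_assoc,
      Equiv.mul_swap_eq_swap_mul, h, h', Equiv.swap_comm (Sum.inr j'), ← mul_assoc,
      Equiv.swap_mul_self, one_mul]
  rw [this, Equiv.Perm.sign_swap hne] at hconj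
  have h2 : (2 : ℝ) • altMatching κ M = 0 := by
    rw [two_smul]
    nth_rewrite 1 [hconj]
    simp
  simpa using h2

lemma exists_conj_of_arcMap_eq {M' : Equiv.Perm (Fin n ⊕ Fin m)} (hM : IsBipartialMatching M)
    (hM' : IsBipartialMatching M') (h : arcMap M = arcMap M') :
    ∃ τ : Equiv.Perm (Fin m), M' = permInr n τ * M * (permInr n τ)⁻¹ := by
  have h1 : ∀ j, ∃ j', M' (M (Sum.inr j)) = Sum.inr j' := by
    intro j
    obtain ⟨x, hx⟩ := hM.exists_inl j
    rw [hx, ← hM'.1.arcMap_eq_self_iff, ← h, hM.1.arcMap_eq_self_iff]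
    exact ⟨j, by rw [← hx, hM.1.apply_apply]⟩
  choose t ht using h1
  have hinj : Function.Injective t := fun a b hab => by
    have := (ht a).trans ((congrArg Sum.inr hab).trans (ht b).symm)
    simpa using this
  let τ : Equiv.Perm (Fin m) := Equiv.ofBijective t (Finite.injective_iff_bijective.mp hinj)
  refine ⟨τ, eq_mul_inv_of_mul_eq (Equiv.ext fun k => ?_)⟩
  rcases k with x | j
  · have hl : (M' * permInr n τ) (Sum.inl x) = M' (Sum.inl x) := rfl
    rw [hl, Equiv.Perm.mul_apply]
    by_cases hx : arcMap M x = x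
    · obtain ⟨j, hj⟩ := (hM.1.arcMap_eq_self_iff x).mp hx
      rw [hj, ← hM.1.apply_apply (Sum.inl x), hj, ht]
      rfl
    · rw [IsMatching.apply_inl_of_ne x hx, IsMatching.apply_inl_of_ne x (h ▸ hx), h]
      rfl
  · obtain ⟨x, hx⟩ := hM.exists_inl j
    have hl : (M' * permInr n τ) (Sum.inr j) = M' (Sum.inr (t j)) := rfl
    rw [hl, ← ht, hM'.1.apply_apply, Equiv.Perm.mul_apply, hx]
    rfl

lemma altMatching_mem_span_singleton {κ : Type*} [DecidableEq κ]
    {M' : Equiv.Perm (Fin n ⊕ Fin m)} (hM : IsBipartialMatching M)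
    (hM' : IsBipartialMatching M') (h : arcMap M = arcMap M') :
    altMatching κ M' ∈ Submodule.span ℝ {altMatching κ M} := by
  obtain ⟨τ, rfl⟩ := exists_conj_of_arcMap_eq hM hM' h
  rw [altMatching_conj]
  exact Submodule.smul_mem _ _ (Submodule.mem_span_singleton_self _)

end

lemma IsMatching.conj {ι : Type*} {M : Equiv.Perm ι} (hM : IsMatching M) (σ : Equiv.Perm ι) :
    IsMatching (σ * M * σ⁻¹) := by
  refine ⟨?_, fun k hk => hM.2 (σ⁻¹ k) ?_⟩
  · have : σ * M * σ⁻¹ * (σ * M * σ⁻¹) = σ * (M * M) * σ⁻¹ := by group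
    rw [this, hM.1, mul_one, mul_inv_cancel]
  · rw [Equiv.Perm.mul_apply, Equiv.Perm.mul_apply] at hk
    rw [Equiv.Perm.eq_inv_iff_eq, hk]

lemma exists_eq_permInr {n m : ℕ} {σ : Equiv.Perm (Fin n ⊕ Fin m)}
    (h : ∀ x, σ (Sum.inl x) = Sum.inl x) : ∃ τ, σ = permInr n τ := by
  have hσ : σ ∈ (Equiv.Perm.sumCongrHom (Fin n) (Fin m)).range := by
    refine Equiv.Perm.mem_sumCongrHom_range_of_perm_mapsTo_inl ?_
    rintro _ ⟨x, rfl⟩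
    exact ⟨x, (h x).symm⟩
  obtain ⟨⟨τ₁, τ⟩, rfl⟩ := hσ
  refine ⟨τ, ?_⟩
  have : τ₁ = 1 := Equiv.ext fun x => by simpa using h x
  rw [this]
  rfl

section

variable {n m k : ℕ} {M : Equiv.Perm (Fin n ⊕ Fin m)} {i p : Fin k → Fin n}

lemma IsMatching.eq_of_apply_inl_eq (hM : IsMatching M) (hip : ∀ a, arcMap M (i a) = p a)
    {a : Fin k} {y : Fin n} (h : M (Sum.inl (p a)) = Sum.inl y) : y = i a ∧ i a ≠ p a := by
  have hy : y = i a := by rw [← arcMap_of_inl h, ← hip, hM.arcMap_arcMap]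
  exact ⟨hy, fun h' => hM.2 (Sum.inl (p a)) (by rw [h, hy, h'])⟩

lemma IsMatching.apply_inl_of_fix (hM : IsMatching M) (hle : ∀ a, i a ≤ p a)
    (hip : ∀ a, arcMap M (i a) = p a) {σ : Equiv.Perm (Fin n ⊕ Fin m)}
    (hσ : ∀ y, (∀ a, y ≠ M (Sum.inl (p a))) → σ y = y) (a : Fin k) :
    σ (Sum.inl (p a)) = Sum.inl (p a) := by
  refine hσ _ fun b h => ?_
  obtain ⟨h1, h2⟩ := hM.eq_of_apply_inl_eq hip h.symm
  have h3 : i a = p b := by rw [← hM.arcMap_arcMap (i a), hip, h1, hip]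
  have h4 := hle a
  have h5 := hle b
  omega

lemma IsMatching.toLex_arcMap_lt_conj (hM : IsMatching M) (hi : StrictMono i)
    (hp : StrictMono p) (hle : ∀ a, i a ≤ p a) (hip : ∀ a, arcMap M (i a) = p a)
    {σ : Equiv.Perm (Fin n ⊕ Fin m)}
    (hσ : ∀ y, (∀ a, y ≠ M (Sum.inl (p a))) → σ y = y)
    (hne : arcMap (σ * M * σ⁻¹) ≠ arcMap M) :
    toLex (arcMap M) < toLex (arcMap (σ * M * σ⁻¹)) := by
  set M' := σ * M * σ⁻¹ with hM'def
  have hM' : IsMatching M' := hM.conj σ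
  have hpi : ∀ a, arcMap M (p a) = i a := fun a => by rw [← hip, hM.arcMap_arcMap]
  have hinj : ∀ {x y}, arcMap M' x = arcMap M' y → x = y := fun {x y} h => by
    rw [← hM'.arcMap_arcMap x, h, hM'.arcMap_arcMap]
  have hopp := hM.apply_inl_of_fix hle hip hσ
  have hσleg : ∀ a, ∃ b, σ (M (Sum.inl (p a))) = M (Sum.inl (p b)) := by
    intro a
    by_contra! h
    have h1 := σ.injective (hσ _ h)
    exact h a h1
  have hσleg' : ∀ a, ∃ b, M (Sum.inl (p a)) = σ (M (Sum.inl (p b))) := by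
    intro a
    by_contra! h
    obtain ⟨w, hw⟩ := σ.surjective (M (Sum.inl (p a)))
    have h1 : σ w = w := hσ _ fun b hb => h b (by rw [← hb, hw])
    exact h a (by rw [← hw, h1, h1])
  have hM'p : ∀ a, M' (Sum.inl (p a)) = σ (M (Sum.inl (p a))) := by
    intro a
    rw [hM'def, Equiv.Perm.mul_apply, Equiv.Perm.mul_apply]
    congr 2
    rw [Equiv.Perm.inv_eq_iff_eq, hopp]
  obtain ⟨x, hx, hmin⟩ : ∃ x, arcMap M' x ≠ arcMap M x ∧ ∀ y < x, arcMap M y = arcMap M' y := by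
    obtain ⟨x, hx, hmin⟩ := WellFounded.has_min (wellFounded_lt (α := Fin n))
      {x | arcMap M' x ≠ arcMap M x} (Function.ne_iff.mp hne)
    refine ⟨x, hx, fun y hy => ?_⟩
    by_contra h
    exact hmin y (Ne.symm h) hy
  refine ⟨x, hmin, ?_⟩
  change arcMap M x < arcMap M' x
  by_cases h1 : ∃ a, Sum.inl x = M (Sum.inl (p a))
  · obtain ⟨a, ha⟩ := h1
    obtain ⟨rfl, hipa⟩ := hM.eq_of_apply_inl_eq hip ha.symm
    obtain ⟨b, hb⟩ := hσleg' a
    have hb' : arcMap M' (i a) = p b := by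
      refine arcMap_of_inl ?_
      rw [ha, hb, ← hM'p, hM'.apply_apply]
    rw [hb', hip]
    rcases lt_trichotomy a b with h | h | h
    · exact hp h
    · exact absurd (by rw [hb', hip, h]) hx
    · have h2 := hmin _ (hi h)
      rw [hip, ← hb'] at h2
      exact absurd (hinj h2) (hi h).ne'
  · by_cases h2 : ∃ a, x = p a
    · obtain ⟨a, rfl⟩ := h2
      rcases (hle a).lt_or_eq with h | h
      · have h3 := hmin _ h
        rw [hip] at h3
        exact absurd (by rw [h3, hM'.arcMap_arcMap, ← h3, hpi]) hx
      · obtain ⟨b, hb⟩ := hσleg a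
        rcases hb' : M (Sum.inl (p b)) with y | j
        · obtain ⟨rfl, hipb⟩ := hM.eq_of_apply_inl_eq hip hb'
          have h3 : arcMap M' (p a) = i b := arcMap_of_inl (by rw [hM'p, hb, hb'])
          rw [h3, hpi] at hx ⊢
          rw [h]
          by_contra! h4
          have h5 := hmin _ (lt_of_le_of_ne h4 (h ▸ hx))
          rw [← h3, hM'.arcMap_arcMap, h3, hip] at h5
          rw [hp.injective h5] at hx
          exact hx rfl
        · exact absurd (by rw [arcMap_of_inr (by rw [hM'p, hb, hb']), hpi, h]) hx
    · push Not at h1 h2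
      refine absurd ?_ hx
      have h3 : M' (Sum.inl x) = M (Sum.inl x) := by
        rw [hM'def, Equiv.Perm.mul_apply, Equiv.Perm.mul_apply,
          Equiv.Perm.inv_eq_iff_eq.mpr (hσ _ h1).symm]
        exact hσ _ fun a ha => h2 a (Sum.inl_injective (M.injective ha))
      rw [arcMap, arcMap, h3]

lemma IsMatching.altMatching_conj_of_arcMap_eq {κ : Type*} [DecidableEq κ] (hM : IsMatching M)
    (hle : ∀ a, i a ≤ p a) (hip : ∀ a, arcMap M (i a) = p a)
    {σ : Equiv.Perm (Fin n ⊕ Fin m)} (hσ : ∀ y, (∀ a, y ≠ M (Sum.inl (p a))) → σ y = y)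
    (he : arcMap (σ * M * σ⁻¹) = arcMap M) :
    altMatching κ (σ * M * σ⁻¹) = ((Equiv.Perm.sign σ : ℤ) : ℝ) • altMatching κ M := by
  obtain ⟨τ, rfl⟩ : ∃ τ, σ = permInr n τ := by
    refine exists_eq_permInr fun x => ?_
    by_cases hx : ∃ a, Sum.inl x = M (Sum.inl (p a))
    · obtain ⟨a, ha⟩ := hx
      obtain ⟨rfl, hipa⟩ := hM.eq_of_apply_inl_eq hip ha.symm
      have h1 : arcMap (σ * M * σ⁻¹) (p a) = i a := by rw [he, ← hip, hM.arcMap_arcMap]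
      have h2 := IsMatching.apply_inl_of_ne (M := σ * M * σ⁻¹) (p a) (by rwa [h1])
      rw [h1, Equiv.Perm.mul_apply, Equiv.Perm.mul_apply,
        Equiv.Perm.inv_eq_iff_eq.mpr (hM.apply_inl_of_fix hle hip hσ a).symm, ← ha] at h2
      exact h2
    · push Not at hx
      exact hσ _ hx
  rw [altMatching_conj, permInr, Equiv.Perm.sign_sumCongr, Equiv.Perm.sign_one, one_mul]

end

section

variable {n m : ℕ} {κ : Type*} [Fintype κ] [DecidableEq κ]

lemma sum_sign_smul_altMatching_conj_eq_zero (M : Equiv.Perm (Fin n ⊕ Fin m))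
    (I : Finset (Fin n ⊕ Fin m)) (hI : Fintype.card κ < I.card) :
    ∑ σ : Equiv.Perm (Fin n ⊕ Fin m) with ∀ k, k ∉ I → σ k = k,
      ((Equiv.Perm.sign σ : ℤ) : ℝ) • altMatching κ (σ * M * σ⁻¹) = 0 := by
  have h : ∑ σ : Equiv.Perm (Fin n ⊕ Fin m) with ∀ k, k ∉ I → σ k = k,
      ((Equiv.Perm.sign σ : ℤ) : ℝ) • matchingTensor (κ := κ) (σ * M * σ⁻¹) = 0 := by
    ext c
    simp only [Finset.sum_apply, Pi.smul_apply, smul_eq_mul, ← matchingTensor_comp, Pi.zero_apply]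
    exact sum_sign_comp_eq_zero I hI (matchingTensor M) c
  simpa [altMatching] using congrArg (altSum n m κ) h

lemma IsMatching.altMatching_mem_span_of_chain {M : Equiv.Perm (Fin n ⊕ Fin m)}
    (hM : IsMatching M) {k : ℕ} (hk : Fintype.card κ < k) {f : Fin k → Fin n}
    (hf : StrictMono f) (hf' : StrictMono fun a => arcMap M (f a)) :
    altMatching κ M ∈ Submodule.span ℝ {v | ∃ M' : Equiv.Perm (Fin n ⊕ Fin m),
      IsMatching M' ∧ toLex (arcMap M) < toLex (arcMap M') ∧ v = altMatching κ M'} := by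
  set W := Submodule.span ℝ {v | ∃ M' : Equiv.Perm (Fin n ⊕ Fin m),
      IsMatching M' ∧ toLex (arcMap M) < toLex (arcMap M') ∧ v = altMatching κ M'} with hW
  let i : Fin k → Fin n := fun a => min (f a) (arcMap M (f a))
  let p : Fin k → Fin n := fun a => max (f a) (arcMap M (f a))
  have hi : StrictMono i := fun a b h => min_lt_min (hf h) (hf' h)
  have hp : StrictMono p := fun a b h => max_lt_max (hf h) (hf' h)
  have hle : ∀ a, i a ≤ p a := fun a => min_le_max
  have hip : ∀ a, arcMap M (i a) = p a := by
    intro a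
    rcases le_total (f a) (arcMap M (f a)) with h | h
    · simp [i, p, h]
    · simp [i, p, h, hM.arcMap_arcMap]
  let I : Finset (Fin n ⊕ Fin m) := Finset.univ.image fun a => M (Sum.inl (p a))
  have hI : Fintype.card κ < I.card := by
    have hinj : Function.Injective fun a => M (Sum.inl (p a)) :=
      M.injective.comp (Sum.inl_injective.comp hp.injective)
    rwa [Finset.card_image_of_injective _ hinj, Finset.card_fin]
  have hfix : ∀ σ : Equiv.Perm (Fin n ⊕ Fin m), (∀ k, k ∉ I → σ k = k) →
      ∀ y, (∀ a, y ≠ M (Sum.inl (p a))) → σ y = y := fun σ hσ y hy => hσ y (by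
    simpa [I, eq_comm] using hy)
  have h0 := sum_sign_smul_altMatching_conj_eq_zero (κ := κ) M I hI
  rw [← Finset.sum_filter_add_sum_filter_not _
    fun σ : Equiv.Perm (Fin n ⊕ Fin m) => arcMap (σ * M * σ⁻¹) = arcMap M] at h0
  set S := Finset.univ.filter fun σ : Equiv.Perm (Fin n ⊕ Fin m) => ∀ k, k ∉ I → σ k = k
  set E := S.filter fun σ => arcMap (σ * M * σ⁻¹) = arcMap M
  have h1 : ∑ σ ∈ E, ((Equiv.Perm.sign σ : ℤ) : ℝ) • altMatching κ (σ * M * σ⁻¹) =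
      (E.card : ℝ) • altMatching κ M := by
    rw [Nat.cast_smul_eq_nsmul, ← Finset.sum_const]
    refine Finset.sum_congr rfl fun σ hσ => ?_
    obtain ⟨hσS, hσE⟩ := Finset.mem_filter.mp hσ
    rw [hM.altMatching_conj_of_arcMap_eq hle hip (hfix σ (Finset.mem_filter.mp hσS).2) hσE,
      smul_smul, sign_cast_mul_self, one_smul]
  have h2 : ∑ σ ∈ S with ¬ arcMap (σ * M * σ⁻¹) = arcMap M,
      ((Equiv.Perm.sign σ : ℤ) : ℝ) • altMatching κ (σ * M * σ⁻¹) ∈ W := by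
    refine Submodule.sum_mem _ fun σ hσ => Submodule.smul_mem _ _ (Submodule.subset_span ?_)
    obtain ⟨hσS, hσE⟩ := Finset.mem_filter.mp hσ
    exact ⟨_, hM.conj σ, hM.toLex_arcMap_lt_conj hi hp hle hip
      (hfix σ (Finset.mem_filter.mp hσS).2) hσE, rfl⟩
  have hE : (E.card : ℝ) ≠ 0 := by
    have : (1 : Equiv.Perm (Fin n ⊕ Fin m)) ∈ E := by simp [E, S]
    exact_mod_cast (Finset.card_pos.mpr ⟨1, this⟩).ne'
  rw [h1] at h0
  refine (Submodule.smul_mem_iff _ hE).mp ?_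
  rw [eq_neg_of_add_eq_zero_left h0]
  exact Submodule.neg_mem _ h2

/-- The straightening theorem: the tensors of matchings whose arc map has no long increasing
subsequence span. -/
lemma IsMatching.altMatching_mem_span {M : Equiv.Perm (Fin n ⊕ Fin m)} (hM : IsMatching M) :
    altMatching κ M ∈ Submodule.span ℝ {v | ∃ M' : Equiv.Perm (Fin n ⊕ Fin m),
      IsBipartialMatching M' ∧ (∀ (k : ℕ) (f : Fin k → Fin n), StrictMono f →
        StrictMono (fun a => arcMap M' (f a)) → k ≤ Fintype.card κ) ∧
      v = altMatching κ M'} := by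
  induction h : toLex (arcMap M) using WellFoundedGT.induction generalizing M with
  | ind x ih =>
    subst h
    by_cases hb : IsBipartialMatching M
    · by_cases hg : ∀ (k : ℕ) (f : Fin k → Fin n), StrictMono f →
          StrictMono (fun a => arcMap M (f a)) → k ≤ Fintype.card κ
      · exact Submodule.subset_span ⟨M, hb, hg, rfl⟩
      · push Not at hg
        obtain ⟨k, f, hf, hf', hk⟩ := hg
        refine Submodule.span_le.mpr ?_ (hM.altMatching_mem_span_of_chain hk hf hf')
        rintro _ ⟨M', hM', hlt, rfl⟩
        exact ih _ hlt hM' rfl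
    · have : ∃ j j', M (Sum.inr j) = Sum.inr j' := by
        by_contra! h
        exact hb ⟨hM, h⟩
      obtain ⟨j, j', h⟩ := this
      rw [altMatching_eq_zero hM h]
      exact Submodule.zero_mem _

end

lemma exists_isBipartialMatching_arcMap_eq {n m : ℕ} {π : Equiv.Perm (Fin n)} (hπ : π * π = 1)
    (hm : (Finset.univ.filter fun x => π x = x).card = m) :
    ∃ M : Equiv.Perm (Fin n ⊕ Fin m), IsBipartialMatching M ∧ arcMap M = π := by
  have hππ : ∀ x, π (π x) = x := fun x => by rw [← Equiv.Perm.mul_apply, hπ]; rfl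
  let e : {x // π x = x} ≃ Fin m := Fintype.equivFinOfCardEq (by rw [Fintype.card_subtype, hm])
  let F : Fin n ⊕ Fin m → Fin n ⊕ Fin m := Sum.elim
    (fun x => if h : π x = x then Sum.inr (e ⟨x, h⟩) else Sum.inl (π x))
    (fun j => Sum.inl (e.symm j))
  have hF : Function.Involutive F := by
    rintro (x | j)
    · by_cases h : π x = x
      · simp [F, h]
      · simp [F, h, hππ, Ne.symm h]
    · simp [F, (e.symm j).2]
  refine ⟨hF.toPerm, ⟨⟨Equiv.ext hF, ?_⟩, fun j j' => ?_⟩, funext fun x => ?_⟩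
  · rintro (x | j)
    · by_cases h : π x = x <;> simp [F, h]
    · simp [F]
  · simp [F]
  · by_cases h : π x = x <;> simp [F, h, arcMap]

lemma IsBipartialMatching.exists_perm {n m : ℕ} {M : Equiv.Perm (Fin n ⊕ Fin m)}
    (hM : IsBipartialMatching M) : ∃ π : Equiv.Perm (Fin n), arcMap M = π ∧ π * π = 1 ∧
      (Finset.univ.filter fun x => π x = x).card = m := by
  have hinv : Function.Involutive (arcMap M) := hM.1.arcMap_arcMap
  refine ⟨hinv.toPerm, rfl, Equiv.ext hinv, ?_⟩
  choose g hg using hM.exists_inl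
  have hinj : Function.Injective g := fun a b h => by
    have := (hg a).trans ((congrArg Sum.inl h).trans (hg b).symm)
    simpa using this
  have : (Finset.univ.filter fun x => arcMap M x = x) = Finset.univ.image g := by
    ext x
    simp only [Finset.mem_filter, Finset.mem_univ, true_and, Finset.mem_image,
      hM.1.arcMap_eq_self_iff]
    refine exists_congr fun j => ⟨fun h => Sum.inl_injective (β := Fin m) ?_, fun h => ?_⟩
    · rw [← hg, ← h, hM.1.apply_apply]
    · rw [← h, ← hg, hM.1.apply_apply]
  change (Finset.univ.filter fun x => arcMap M x = x).card = m
  rw [this, Finset.card_image_of_injective _ hinj, Finset.card_fin]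

lemma StrictMono.fin_snoc {α : Type*} [Preorder α] {k : ℕ} {f : Fin k → α} (hf : StrictMono f)
    {y : α} (h : ∀ i, f i < y) : StrictMono (Fin.snoc f y : Fin (k + 1) → α) := by
  intro a b hab
  induction b using Fin.lastCases with
  | last =>
    obtain ⟨a, rfl⟩ := Fin.exists_castSucc_eq.mpr hab.ne
    simpa using h a
  | cast b =>
    obtain ⟨a, rfl⟩ := Fin.exists_castSucc_eq.mpr (hab.trans (Fin.castSucc_lt_last b)).ne
    simpa using hf (Fin.castSucc_lt_castSucc_iff.mp hab)

/-- Colouring the points of an involution by the length of the longest increasing subsequence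
ending there. -/
lemma lisLE.exists_colouring {n l : ℕ} {π : Equiv.Perm (Fin n)} (h : lisLE π l)
    (hπ : π * π = 1) : ∃ c : Fin n → Fin l, (∀ x, c (π x) = c x) ∧
      ∀ x y, x < y → c x = c y → π y < π x := by
  classical
  have hππ : ∀ x, π (π x) = x := fun x => by rw [← Equiv.Perm.mul_apply, hπ]; rfl
  let P : Fin n → ℕ → Prop := fun x k => ∃ f : Fin (k + 1) → Fin n,
    StrictMono f ∧ StrictMono (fun i => π (f i)) ∧ f (Fin.last k) = x
  have hP0 : ∀ x, P x 0 := fun x => ⟨fun _ => x, Fin.strictMono_iff_lt_succ.mpr finZeroElim,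
    Fin.strictMono_iff_lt_succ.mpr finZeroElim, rfl⟩
  have hPl : ∀ {x k}, P x k → k < l := fun ⟨f, hf, hf', _⟩ => h _ f hf hf'
  have hPπ : ∀ {x k}, P x k → P (π x) k := fun ⟨f, hf, hf', hx⟩ =>
    ⟨fun i => π (f i), hf', by simpa only [hππ] using hf, by simp only [hx]⟩
  have hPs : ∀ {x y k}, x < y → π x < π y → P x k → P y (k + 1) := by
    rintro x y k hxy hxy' ⟨f, hf, hf', rfl⟩
    refine ⟨Fin.snoc f y, hf.fin_snoc fun i => (hf.monotone (Fin.le_last i)).trans_lt hxy,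
      ?_, by simp⟩
    have := hf'.fin_snoc fun i => (hf'.monotone (Fin.le_last i)).trans_lt hxy'
    rwa [show (Fin.snoc (fun i => π (f i)) (π y) : Fin (k + 2) → Fin n) =
      fun i => π (Fin.snoc (α := fun _ => Fin n) f y i) from (Fin.comp_snoc π f y).symm] at this
  let r : Fin n → ℕ := fun x => Nat.findGreatest (P x) l
  have hr : ∀ x, P x (r x) := fun x => Nat.findGreatest_spec (Nat.zero_le l) (hP0 x)
  have hle : ∀ {x k}, P x k → k ≤ r x := fun hk => Nat.le_findGreatest (hPl hk).le hk
  refine ⟨fun x => ⟨r x, hPl (hr x)⟩, fun x => Fin.ext ?_, fun x y hxy hc => ?_⟩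
  · refine le_antisymm ?_ (hle (hPπ (hr x)))
    have := hle (hPπ (hr (π x)))
    rwa [hππ] at this
  · by_contra! h'
    have h'' := h'.lt_of_ne (fun he => hxy.ne (π.injective he))
    have h3 := hle (hPs hxy h'' (hr x))
    have h4 : r x = r y := congrArg Fin.val hc
    omega

lemma linearIndependent_of_triangular {ι V L : Type*} [Finite ι] [LinearOrder L]
    [WellFoundedLT L] [AddCommGroup V] [Module ℝ V] (v : ι → V) (φ : ι → V →ₗ[ℝ] ℝ)
    (r : ι → L) (hv : ∀ i, φ i (v i) ≠ 0) (hlt : ∀ i j, φ i (v j) ≠ 0 → j ≠ i → r j < r i) :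
    LinearIndependent ℝ v := by
  have := Fintype.ofFinite ι
  rw [Fintype.linearIndependent_iff]
  intro g hg i
  induction h : r i using WellFoundedLT.induction generalizing i with
  | ind x ih =>
    subst h
    have h1 := congrArg (φ i) hg
    rw [map_sum, map_zero, Finset.sum_eq_single i] at h1
    · simpa [hv i] using h1
    · intro j _ hj
      by_cases h2 : φ i (v j) = 0
      · simp [h2]
      · simp [ih _ (hlt i j h2 hj) j rfl]
    · simp

lemma exists_forall_eq_of_altMatching_ne_zero {n m : ℕ} {κ : Type*} [DecidableEq κ]
    {M : Equiv.Perm (Fin n ⊕ Fin m)} {C : Fin n ⊕ Fin m → κ} (h : altMatching κ M C ≠ 0) :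
    ∀ x, C (Sum.inl (arcMap M x)) = C (Sum.inl x) := by
  rw [altMatching, altSum_apply] at h
  obtain ⟨τ, -, hτ⟩ := Finset.exists_ne_zero_of_sum_ne_zero (right_ne_zero_of_mul h)
  have hτ' : ∀ k, (C ∘ permInr n τ) (M k) = (C ∘ permInr n τ) k := by
    by_contra hc
    exact hτ (by rw [matchingTensor, if_neg hc, mul_zero])
  intro x
  rcases hx : M (Sum.inl x) with y | j
  · rw [arcMap_of_inl hx]
    have := hτ' (Sum.inl x)
    rw [hx] at this
    exact this
  · rw [arcMap_of_inr hx]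

lemma altMatching_apply_ne_zero {n m : ℕ} {κ : Type*} [DecidableEq κ]
    {M : Equiv.Perm (Fin n ⊕ Fin m)} (hM : IsBipartialMatching M) {c : Fin n → κ}
    (hc : ∀ x, c (arcMap M x) = c x)
    (hinj : ∀ x y, arcMap M x = x → arcMap M y = y → c x = c y → x = y)
    {g : Fin m → Fin n} (hg : ∀ j, M (Sum.inr j) = Sum.inl (g j)) :
    altMatching κ M (Sum.elim c (c ∘ g)) ≠ 0 := by
  have hg' : ∀ j, M (Sum.inl (g j)) = Sum.inr j := fun j => by rw [← hg, hM.1.apply_apply]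
  rw [altMatching, altSum_apply, Finset.sum_eq_single 1]
  · have : ∀ k, (Sum.elim c (c ∘ g) ∘ permInr n 1) (M k) =
        (Sum.elim c (c ∘ g) ∘ permInr n 1) k := by
      have h1 : (permInr n (1 : Equiv.Perm (Fin m))) = 1 := Equiv.Perm.sumCongr_one
      rw [h1, Equiv.Perm.coe_one, Function.comp_id]
      rintro (x | j)
      · rcases hx : M (Sum.inl x) with y | j
        · rw [← arcMap_of_inl hx]
          exact hc x
        · have : x = g j := Sum.inl_injective (β := Fin m) (by rw [← hg, ← hx, hM.1.apply_apply])
          rw [this]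
          rfl
      · rw [hg]
        rfl
    rw [matchingTensor, if_pos this]
    simp [Nat.factorial_ne_zero]
  · intro τ _ hτ
    rw [matchingTensor, if_neg, mul_zero]
    intro h
    refine hτ (Equiv.ext fun j => ?_)
    have h1 := h (Sum.inr j)
    rw [hg] at h1
    have h2 : g j = g (τ j) := hinj _ _ (arcMap_of_inr (hg' _)) (arcMap_of_inr (hg' _)) h1
    have h3 := hg' j
    rw [h2, hg'] at h3
    exact Sum.inr_injective h3
  · simp

/-- The involutions counted by `gOCount`. -/
abbrev GoodInvolution (n m l : ℕ) : Type :=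
  {π : Equiv.Perm (Fin n) //
    π * π = 1 ∧ (Finset.univ.filter fun x => π x = x).card = m ∧ lisLE π l}

/-- A matching realizing a given involution. -/
def GoodInvolution.matching {n m l : ℕ} (π : GoodInvolution n m l) :
    Equiv.Perm (Fin n ⊕ Fin m) :=
  (exists_isBipartialMatching_arcMap_eq π.2.1 π.2.2.1).choose

section

variable {n m l : ℕ}

lemma GoodInvolution.isBipartialMatching (π : GoodInvolution n m l) :
    IsBipartialMatching π.matching :=
  (exists_isBipartialMatching_arcMap_eq π.2.1 π.2.2.1).choose_spec.1

lemma GoodInvolution.arcMap_matching (π : GoodInvolution n m l) : arcMap π.matching = π.1 :=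
  (exists_isBipartialMatching_arcMap_eq π.2.1 π.2.2.1).choose_spec.2

lemma altInvariants_eq_span_range :
    altInvariants n m (Fin l) = Submodule.span ℝ
      (Set.range fun π : GoodInvolution n m l => altMatching (Fin l) π.matching) := by
  refine le_antisymm ?_ ?_
  · rw [altInvariants_eq_span, Submodule.span_le]
    rintro _ ⟨M, hM, hne, rfl⟩
    refine Submodule.span_le.mpr ?_ (IsMatching.altMatching_mem_span ⟨hM, hne⟩)
    rintro _ ⟨M', hM', hl, rfl⟩
    obtain ⟨π, hπ, hππ, hm⟩ := hM'.exists_perm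
    rw [hπ, Fintype.card_fin] at hl
    let ρ : GoodInvolution n m l := ⟨π, hππ, hm, hl⟩
    refine Submodule.span_mono (Set.singleton_subset_iff.mpr (Set.mem_range_self ρ))
      (altMatching_mem_span_singleton ρ.isBipartialMatching hM' ?_)
    rw [ρ.arcMap_matching, hπ]
  · rw [altInvariants_eq_span]
    refine Submodule.span_mono ?_
    rintro _ ⟨π, rfl⟩
    exact ⟨_, π.isBipartialMatching.1.1, π.isBipartialMatching.1.2, rfl⟩

lemma linearIndependent_altMatching_matching :
    LinearIndependent ℝ
      fun π : GoodInvolution n m l => altMatching (Fin l) π.matching := by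
  choose c hc hlt using fun π : GoodInvolution n m l => lisLE.exists_colouring π.2.2.2 π.2.1
  choose g hg using fun π : GoodInvolution n m l => π.isBipartialMatching.exists_inl
  refine linearIndependent_of_triangular _
    (fun π => LinearMap.proj (Sum.elim (c π) (c π ∘ g π)))
    (fun π => toLex (π.1 : Fin n → Fin n)) (fun π => ?_) fun π ρ h hne => ?_
  · refine altMatching_apply_ne_zero π.isBipartialMatching (fun x => ?_) (fun x y hx hy h => ?_)
      (hg π)
    · rw [π.arcMap_matching, hc]
    · rw [π.arcMap_matching] at hx hy
      rcases lt_trichotomy x y with hxy | hxy | hxy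
      · have := hlt π x y hxy h
        rw [hx, hy] at this
        exact absurd this hxy.not_gt
      · exact hxy
      · have := hlt π y x hxy h.symm
        rw [hx, hy] at this
        exact absurd this hxy.not_gt
  · have hρ : ∀ x, c π (ρ.1 x) = c π x := by
      have := exists_forall_eq_of_altMatching_ne_zero h
      rwa [ρ.arcMap_matching] at this
    have hππ : ∀ x, π.1 (π.1 x) = x := fun x => by rw [← Equiv.Perm.mul_apply, π.2.1]; rfl
    have hρρ : ∀ x, ρ.1 (ρ.1 x) = x := fun x => by rw [← Equiv.Perm.mul_apply, ρ.2.1]; rfl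
    rcases lt_trichotomy (toLex (ρ.1 : Fin n → Fin n)) (toLex (π.1 : Fin n → Fin n))
      with hlt' | heq | ⟨x, hx, hlt'⟩
    · exact hlt'
    · exact absurd (Subtype.ext (DFunLike.coe_injective (toLex.injective heq))) hne
    · change π.1 x < ρ.1 x at hlt'
      change ∀ y < x, π.1 y = ρ.1 y at hx
      have h1 : π.1 (ρ.1 x) < x := by
        have := hlt π (π.1 x) (ρ.1 x) hlt' (by rw [hc, hρ])
        rwa [hππ] at this
      have h2 := hx _ h1
      rw [hππ] at h2
      have h3 := ρ.1.injective h2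
      rw [← h3] at h1
      exact absurd h1 (lt_irrefl _)

lemma finrank_altInvariants :
    Module.finrank ℝ (altInvariants n m (Fin l)) = gOCount n m l := by
  have := Fintype.ofFinite (GoodInvolution n m l)
  rw [altInvariants_eq_span_range, finrank_span_eq_card linearIndependent_altMatching_matching,
    gOCount, Nat.card_eq_fintype_card]

end

lemma isCompact_orthogonalGroup (l : ℕ) :
    IsCompact (Matrix.orthogonalGroup (Fin l) ℝ : Set (Matrix (Fin l) (Fin l) ℝ)) := by
  have hK : IsCompact (Set.univ.pi fun _ : Fin l => Set.univ.pi fun _ : Fin l =>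
      Set.Icc (-1 : ℝ) 1) :=
    isCompact_univ_pi fun _ => isCompact_univ_pi fun _ => isCompact_Icc
  refine IsCompact.of_isClosed_subset (s := (Set.univ.pi fun _ : Fin l => Set.univ.pi
    fun _ : Fin l => Set.Icc (-1 : ℝ) 1)) hK ?_ fun U hU i _ j _ => ?_
  · have : (Matrix.orthogonalGroup (Fin l) ℝ : Set (Matrix (Fin l) (Fin l) ℝ)) =
        {U | U * Uᵀ = 1} := by
      ext U
      exact Matrix.mem_orthogonalGroup_iff (Fin l) ℝ
    rw [this]
    exact isClosed_eq (by fun_prop) continuous_const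
  · exact abs_le.mp (entry_norm_bound_of_unitary hU i j)

section

variable {l : ℕ} (μ : Measure (Matrix.orthogonalGroup (Fin l) ℝ)) [IsProbabilityMeasure μ]

lemma integrable_of_continuous {f : Matrix (Fin l) (Fin l) ℝ → ℝ} (hf : Continuous f) :
    Integrable (fun U : Matrix.orthogonalGroup (Fin l) ℝ => f U) μ := by
  obtain ⟨C, hC⟩ := (isCompact_orthogonalGroup l).exists_bound_of_continuousOn hf.continuousOn
  exact Integrable.of_bound (hf.comp continuous_subtype_val).aestronglyMeasurable C
    (Filter.Eventually.of_forall fun U => hC U U.2)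

/-- The average of the tensor power representation. -/
def tensorAverage (ι : Type*) [Fintype ι] : Matrix (ι → Fin l) (ι → Fin l) ℝ :=
  Matrix.of fun c d => ∫ U, tensorPow ι (U : Matrix (Fin l) (Fin l) ℝ) c d ∂μ

variable {ι : Type*} [Fintype ι] [DecidableEq ι]

omit [DecidableEq ι] in
lemma continuous_tensorPow (c d : ι → Fin l) :
    Continuous fun A : Matrix (Fin l) (Fin l) ℝ => tensorPow ι A c d := by
  simp only [tensorPow, Matrix.of_apply]
  fun_prop

lemma tensorAverage_mulVec (v : (ι → Fin l) → ℝ) (c : ι → Fin l) :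
    (tensorAverage μ ι *ᵥ v) c = ∫ U, (tensorPow ι (U : Matrix (Fin l) (Fin l) ℝ) *ᵥ v) c ∂μ := by
  simp only [mulVec, dotProduct, tensorAverage, Matrix.of_apply]
  rw [integral_finsetSum _ fun d _ => (integrable_of_continuous μ
    (continuous_tensorPow c d)).mul_const _]
  simp_rw [integral_mul_const]

lemma tensorPow_mul_tensorAverage [μ.IsMulLeftInvariant]
    (V : Matrix.orthogonalGroup (Fin l) ℝ) :
    tensorPow ι (V : Matrix (Fin l) (Fin l) ℝ) * tensorAverage μ ι = tensorAverage μ ι := by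
  ext c d
  have h := integral_mul_left_eq_self (μ := μ)
    (fun U => tensorPow ι (U : Matrix (Fin l) (Fin l) ℝ) c d) V
  rw [tensorAverage, Matrix.of_apply, ← h, Matrix.mul_apply]
  simp only [Matrix.of_apply, Submonoid.coe_mul, tensorPow_mul, Matrix.mul_apply]
  rw [integral_finsetSum _ fun e _ => (integrable_of_continuous μ
    (continuous_tensorPow e d)).const_mul _]
  simp_rw [integral_const_mul]

lemma isProj_altInvariants (n m : ℕ) [μ.IsMulLeftInvariant] :
    LinearMap.IsProj (altInvariants n m (Fin l))
      ((tensorAverage μ (Fin n ⊕ Fin m)).mulVecLin ∘ₗ altSum n m (Fin l)) := by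
  refine ⟨fun v => ⟨fun U hU => ?_, ?_⟩, fun v hv => ?_⟩
  · rw [LinearMap.comp_apply, mulVecLin_apply, mulVec_mulVec,
      tensorPow_mul_tensorAverage μ ⟨U, hU⟩]
  · rw [LinearMap.comp_apply, mulVecLin_apply, altSum_mulVec, altSum_altSum]
    intro τ c d
    simp only [tensorAverage, Matrix.of_apply, tensorPow_comp]
  · rw [LinearMap.comp_apply, hv.2, mulVecLin_apply]
    ext c
    rw [tensorAverage_mulVec]
    have : ∀ U : Matrix.orthogonalGroup (Fin l) ℝ,
        (tensorPow _ (U : Matrix (Fin l) (Fin l) ℝ) *ᵥ v) c = v c := fun U => by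
      rw [hv.1 U U.2]
    simp [this]

end

/-- The sum of the principal `m × m` minors, written as a sum over ordered tuples. -/
def minorSum {l : ℕ} (m : ℕ) (A : Matrix (Fin l) (Fin l) ℝ) : ℝ :=
  (Nat.factorial m : ℝ)⁻¹ * ∑ d : Fin m → Fin l, (A.submatrix d d).det

lemma trace_mulVecLin_comp_funLeft {X : Type*} [Fintype X] [DecidableEq X] (B : Matrix X X ℝ)
    (φ : X → X) : LinearMap.trace ℝ _ (B.mulVecLin ∘ₗ LinearMap.funLeft ℝ ℝ φ) =
      ∑ c, B (φ c) c := by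
  rw [LinearMap.trace_eq_matrix_trace ℝ (Pi.basisFun ℝ X), Matrix.trace]
  simp only [diag_apply, LinearMap.toMatrix_apply, Pi.basisFun_apply, LinearMap.comp_apply,
    mulVecLin_apply, Pi.basisFun_repr, mulVec, dotProduct, LinearMap.funLeft_apply]
  rw [Finset.sum_comm]
  refine Finset.sum_congr rfl fun c _ => ?_
  simp [Pi.single_apply]

section

variable {n m l : ℕ}

lemma trace_mulVecLin_comp_altSum
    (B : Matrix ((Fin n ⊕ Fin m) → Fin l) ((Fin n ⊕ Fin m) → Fin l) ℝ) :
    LinearMap.trace ℝ _ (B.mulVecLin ∘ₗ altSum n m (Fin l)) =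
      (Nat.factorial m : ℝ)⁻¹ * ∑ τ : Equiv.Perm (Fin m), ((Equiv.Perm.sign τ : ℤ) : ℝ) *
        ∑ c, B (c ∘ permInr n τ) c := by
  rw [altSum, LinearMap.comp_smul, map_smul, smul_eq_mul, ← LinearMap.compRight_apply ℝ]
  simp only [map_sum, LinearMap.compRight_apply, map_smul,
    trace_mulVecLin_comp_funLeft, smul_eq_mul]

lemma sum_tensorPow_comp_permInr (A : Matrix (Fin l) (Fin l) ℝ) (τ : Equiv.Perm (Fin m)) :
    ∑ c, tensorPow (Fin n ⊕ Fin m) A (c ∘ permInr n τ) c =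
      A.trace ^ n * ∑ d : Fin m → Fin l, ∏ j, A (d (τ j)) (d j) := by
  rw [← (Equiv.sumArrowEquivProdArrow (Fin n) (Fin m) (Fin l)).symm.sum_comp,
    Fintype.sum_prod_type]
  have h : A.trace ^ n = ∑ d : Fin n → Fin l, ∏ j, A (d j) (d j) := by
    rw [Matrix.trace, Fintype.sum_pow]
    rfl
  rw [h, Finset.sum_mul_sum]
  simp [tensorPow, Fintype.prod_sum_type, Equiv.sumArrowEquivProdArrow]

lemma minor_formula (A : Matrix (Fin l) (Fin l) ℝ) :
    (Nat.factorial m : ℝ)⁻¹ * ∑ τ : Equiv.Perm (Fin m), ((Equiv.Perm.sign τ : ℤ) : ℝ) *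
        ∑ c, tensorPow (Fin n ⊕ Fin m) A (c ∘ permInr n τ) c =
      minorSum m A * A.trace ^ n := by
  simp only [sum_tensorPow_comp_permInr, minorSum, Matrix.det_apply', submatrix_apply]
  rw [mul_assoc, Finset.sum_comm, Finset.sum_mul]
  congr 1
  refine Finset.sum_congr rfl fun τ _ => ?_
  rw [← Finset.mul_sum]
  ring

lemma continuous_minorSum : Continuous fun A : Matrix (Fin l) (Fin l) ℝ => minorSum m A := by
  unfold minorSum
  fun_prop

lemma gOCount_eq_integral (n m : ℕ) (μ : Measure (Matrix.orthogonalGroup (Fin l) ℝ))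
    [IsProbabilityMeasure μ] [μ.IsMulLeftInvariant] :
    (gOCount n m l : ℝ) = ∫ U, minorSum m (U : Matrix (Fin l) (Fin l) ℝ) *
      (U : Matrix (Fin l) (Fin l) ℝ).trace ^ n ∂μ := by
  rw [← finrank_altInvariants, ← (isProj_altInvariants μ n m).trace,
    trace_mulVecLin_comp_altSum]
  simp only [← minor_formula]
  rw [integral_const_mul, integral_finsetSum]
  · congr 1
    refine Finset.sum_congr rfl fun τ _ => ?_
    rw [integral_const_mul, integral_finsetSum _ fun c _ =>
      integrable_of_continuous μ (continuous_tensorPow _ _)]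
    rfl
  · exact fun τ _ => (integrable_finsetSum _ fun c _ =>
      integrable_of_continuous μ (continuous_tensorPow _ _)).const_mul _

end

section

variable {l : ℕ} (m : ℕ) (A : Matrix (Fin l) (Fin l) ℝ)

lemma minorSum_eq_sum_minors : minorSum m A =
    ∑ s ∈ Finset.powersetCard m Finset.univ,
      (A.submatrix (Subtype.val : {x // x ∈ s} → Fin l) Subtype.val).det := by
  have h1 : ∑ d : Fin m → Fin l, (A.submatrix d d).det =
      ∑ d : Fin m → Fin l with Function.Injective d, (A.submatrix d d).det := by
    refine (Finset.sum_filter_of_ne fun d _ hd => ?_).symm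
    by_contra hinj
    obtain ⟨i, j, hij, hne⟩ := Function.not_injective_iff.mp hinj
    exact hd (det_zero_of_row_eq hne (by ext k; simp [hij]))
  have hmaps : ∀ d ∈ Finset.univ.filter fun d : Fin m → Fin l => Function.Injective d,
      Finset.univ.image d ∈ Finset.powersetCard m (Finset.univ : Finset (Fin l)) := by
    intro d hd
    rw [Finset.mem_powersetCard_univ,
      Finset.card_image_of_injective _ (Finset.mem_filter.mp hd).2, Finset.card_fin]
  rw [minorSum, h1, ← Finset.sum_fiberwise_of_maps_to hmaps, Finset.mul_sum]
  refine Finset.sum_congr rfl fun s hs => ?_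
  rw [Finset.mem_powersetCard_univ] at hs
  have h2 : ∑ e : Fin m ≃ {x // x ∈ s}, (A.submatrix (Subtype.val ∘ e) (Subtype.val ∘ e)).det =
      ∑ d ∈ (Finset.univ.filter fun d : Fin m → Fin l => Function.Injective d) with
        Finset.univ.image d = s, (A.submatrix d d).det := by
    refine Finset.sum_bij (fun e _ => Subtype.val ∘ e) ?_ ?_ ?_ fun _ _ => rfl
    · intro e _
      simp only [Finset.mem_filter, Finset.mem_univ, true_and]
      refine ⟨Subtype.val_injective.comp e.injective, ?_⟩
      rw [← Finset.image_image, Finset.image_univ_equiv]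
      ext x
      simp
    · intro e _ e' _ h
      exact Equiv.ext fun i => Subtype.ext (congrFun h i)
    · intro d hd
      simp only [Finset.mem_filter, Finset.mem_univ, true_and] at hd
      obtain ⟨hinj, rfl⟩ := hd
      let e : Fin m → {x // x ∈ Finset.univ.image d} := fun i =>
        ⟨d i, Finset.mem_image_of_mem d (Finset.mem_univ i)⟩
      refine ⟨Equiv.ofBijective e ⟨fun i j h => hinj (congrArg Subtype.val h), ?_⟩,
        Finset.mem_univ _, rfl⟩
      rintro ⟨x, hx⟩
      obtain ⟨i, -, rfl⟩ := Finset.mem_image.mp hx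
      exact ⟨i, rfl⟩
  have h3 : ∀ e : Fin m ≃ {x // x ∈ s}, (A.submatrix (Subtype.val ∘ e) (Subtype.val ∘ e)).det =
      (A.submatrix (Subtype.val : {x // x ∈ s} → Fin l) Subtype.val).det := fun e => by
    rw [← submatrix_submatrix, det_submatrix_equiv_self]
  rw [← h2, Finset.sum_congr rfl fun e _ => h3 e, Finset.sum_const, Finset.card_univ,
    Fintype.card_equiv (Fintype.equivFinOfCardEq (by rw [Fintype.card_coe, hs])).symm,
    Fintype.card_fin, nsmul_eq_mul, ← mul_assoc,
    inv_mul_cancel₀ (by exact_mod_cast Nat.factorial_ne_zero m), one_mul]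

lemma minorSum_eq_zero (h : l < m) : minorSum m A = 0 := by
  rw [minorSum_eq_sum_minors, Finset.powersetCard_eq_empty.mpr (by simpa using h),
    Finset.sum_empty]

lemma det_one_add_smul (α : ℝ) :
    (1 + α • A).det = ∑ k ∈ Finset.range (l + 1), α ^ k * minorSum k A := by
  set p := (1 + (Polynomial.X : Polynomial ℝ) • A.map Polynomial.C).det with hp
  have hcoeff : ∀ k, p.coeff k = minorSum k A := fun k => by
    rw [hp, coeff_det_one_add_X_smul_eq_sum_minors, minorSum_eq_sum_minors]
  have hdeg : p.natDegree < l + 1 := by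
    rw [Nat.lt_succ_iff, Polynomial.natDegree_le_iff_coeff_eq_zero]
    exact fun k hk => by rw [hcoeff, minorSum_eq_zero k A hk]
  have heval : p.eval α = (1 + α • A).det := by
    rw [hp, ← Polynomial.coe_evalRingHom, RingHom.map_det]
    congr 1
    ext i j
    simp [Matrix.one_apply, apply_ite, mul_comm α]
  rw [← heval, Polynomial.eval_eq_sum_range' hdeg]
  exact Finset.sum_congr rfl fun k _ => by rw [hcoeff, mul_comm]

end

lemma gOCount_eq_zero {n m l : ℕ} (h : n < m) : gOCount n m l = 0 := by
  have : IsEmpty {π : Equiv.Perm (Fin n) //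
      π * π = 1 ∧ (Finset.univ.filter fun x => π x = x).card = m ∧ lisLE π l} := by
    refine ⟨fun π => ?_⟩
    have h1 := Finset.card_le_univ (Finset.univ.filter fun x => π.1 x = x)
    rw [π.2.2.1, Fintype.card_fin] at h1
    omega
  exact Nat.card_of_isEmpty

lemma sum_range_gOCount (n l : ℕ) (α : ℝ) (μ : Measure (Matrix.orthogonalGroup (Fin l) ℝ))
    [IsProbabilityMeasure μ] [μ.IsMulLeftInvariant] :
    ∑ m ∈ Finset.range (n + 1), α ^ m * (gOCount n m l : ℝ) =
      ∫ U, (1 + α • (U : Matrix (Fin l) (Fin l) ℝ)).det *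
        (U : Matrix (Fin l) (Fin l) ℝ).trace ^ n ∂μ := by
  have h1 : ∑ m ∈ Finset.range (n + 1), α ^ m * (gOCount n m l : ℝ) =
      ∑ m ∈ Finset.range (n + l + 1), α ^ m * (gOCount n m l : ℝ) :=
    Finset.sum_subset (Finset.range_subset_range.mpr (by omega)) fun m _ hm => by
      rw [gOCount_eq_zero (by simpa using hm), Nat.cast_zero, mul_zero]
  have h2 : ∀ A : Matrix (Fin l) (Fin l) ℝ, (1 + α • A).det =
      ∑ m ∈ Finset.range (n + l + 1), α ^ m * minorSum m A := fun A => by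
    rw [det_one_add_smul]
    exact Finset.sum_subset (Finset.range_subset_range.mpr (by omega)) fun m _ hm => by
      rw [minorSum_eq_zero m A (by simpa using hm), mul_zero]
  simp only [h1, h2, Finset.sum_mul, mul_assoc]
  rw [integral_finsetSum]
  · refine Finset.sum_congr rfl fun m _ => ?_
    rw [integral_const_mul, gOCount_eq_integral n m μ]
  · exact fun m _ => (integrable_of_continuous μ
      (continuous_minorSum.mul (continuous_id.matrix_trace.pow n))).const_mul _

/-- `Σ_{n≥0} (t^n/n!) Σ_{m=0}^n α^m g^O_{n,m,l} = E_{U∈O(l)} det(I + αU)·exp(t·Tr(U))`. -/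
theorem gO_gf_eq_orthogonal_integral (l : ℕ) (t α : ℝ) (hα : 0 ≤ α)
    (μ : Measure (Matrix.orthogonalGroup (Fin l) ℝ))
    [μ.IsHaarMeasure] [IsProbabilityMeasure μ] :
    ∑' n : ℕ, (t ^ n / (Nat.factorial n : ℝ)) *
        ∑ m ∈ Finset.range (n + 1), α ^ m * (gOCount n m l : ℝ) =
      ∫ U, Matrix.det (1 + α • (U : Matrix (Fin l) (Fin l) ℝ)) *
        Real.exp (t * Matrix.trace (U : Matrix (Fin l) (Fin l) ℝ)) ∂μ := by
  have hcdet : Continuous fun A : Matrix (Fin l) (Fin l) ℝ => (1 + α • A).det := by fun_prop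
  obtain ⟨C, hC⟩ := (isCompact_orthogonalGroup l).exists_bound_of_continuousOn hcdet.continuousOn
  obtain ⟨T, hT⟩ := (isCompact_orthogonalGroup l).exists_bound_of_continuousOn
    (continuous_id.matrix_trace (R := ℝ)).continuousOn
  have hexp : ∀ x : ℝ, HasSum (fun n : ℕ => x ^ n / (Nat.factorial n : ℝ)) (Real.exp x) :=
    fun x => by rw [Real.exp_eq_exp_ℝ]; exact NormedSpace.expSeries_div_hasSum_exp x
  have hsum := hasSum_integral_of_dominated_convergence (μ := μ)
    (F := fun n (U : Matrix.orthogonalGroup (Fin l) ℝ) =>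
      t ^ n / (Nat.factorial n : ℝ) * ((1 + α • (U : Matrix (Fin l) (Fin l) ℝ)).det *
        (U : Matrix (Fin l) (Fin l) ℝ).trace ^ n))
    (f := fun U : Matrix.orthogonalGroup (Fin l) ℝ =>
      (1 + α • (U : Matrix (Fin l) (Fin l) ℝ)).det *
        Real.exp (t * (U : Matrix (Fin l) (Fin l) ℝ).trace))
    (fun n _ => C * ((|t| * T) ^ n / (Nat.factorial n : ℝ)))
    (fun n => ((integrable_of_continuous μ
      (hcdet.mul (continuous_id.matrix_trace.pow n))).const_mul _).aestronglyMeasurable)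
    (fun n => Filter.Eventually.of_forall fun U => ?_)
    (Filter.Eventually.of_forall fun _ => (hexp _).summable.mul_left C)
    (integrable_const _)
    (Filter.Eventually.of_forall fun U => ?_)
  · rw [← hsum.tsum_eq]
    refine tsum_congr fun n => ?_
    rw [integral_const_mul, sum_range_gOCount n l α μ]
  · have h1 := hC U U.2
    have h2 := hT U U.2
    rw [norm_mul, norm_mul, norm_div, norm_pow, norm_pow, Real.norm_natCast, mul_pow,
      Real.norm_eq_abs t]
    calc |t| ^ n / (Nat.factorial n : ℝ) * (‖(1 + α • (U : Matrix (Fin l) (Fin l) ℝ)).det‖ *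
          ‖(U : Matrix (Fin l) (Fin l) ℝ).trace‖ ^ n)
        ≤ |t| ^ n / (Nat.factorial n : ℝ) * (C * T ^ n) := by
          gcongr
          · exact (norm_nonneg _).trans h1
          · exact h2
      _ = C * (|t| ^ n * T ^ n / (Nat.factorial n : ℝ)) := by ring
  · refine ((hexp (t * (U : Matrix (Fin l) (Fin l) ℝ).trace)).mul_left
      (1 + α • (U : Matrix (Fin l) (Fin l) ℝ)).det).congr_fun fun n => ?_
    rw [mul_pow]
    ring
end
end

section
/- For any nonnegative integers l and n, the family of operators { T_l(π) : π ∈ S_n with L⁻(π) ≤ l } is a basis (i.e. is linearly independent and spans) of the commutant C_n(U(l)) = { A ∈ End((ℂ^l)^{⊗n}) : A ∘ U^{⊗n} = U^{⊗n} ∘ A for every l×l unitary matrix U }, where L⁻(π) is the length of the longest strictly decreasing subsequence of π. -/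
open scoped TensorProduct

noncomputable section

/-- `decLE π l` means the longest strictly decreasing subsequence of the permutation `π`
has length at most `l`. -/
def decLE {N : ℕ} (π : Equiv.Perm (Fin N)) (l : ℕ) : Prop :=
  ∀ (k : ℕ) (f : Fin k → Fin N), StrictMono f → StrictAnti (fun i => π (f i)) → k ≤ l

/-- The endomorphism `M^{⊗n}` of `(ℂ^l)^{⊗n}` induced by a matrix `M`, acting as `M`
on each tensor factor. -/
def tpow (n l : ℕ) (M : Matrix (Fin l) (Fin l) ℂ) :
    Module.End ℂ (⨂[ℂ] _ : Fin n, (Fin l → ℂ)) :=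
  PiTensorProduct.map (fun _ : Fin n => Matrix.toLin' M)

/-- The matrix, in the basis of words, of the operator permuting tensor factors by `π`. -/
def permMatrix {n : ℕ} (l : ℕ) (π : Equiv.Perm (Fin n)) :
    Matrix (Fin n → Fin l) (Fin n → Fin l) ℂ :=
  Matrix.of fun w v => if w = v ∘ π then 1 else 0

section Lex

variable {n : ℕ}

/-- The first index moved by a nontrivial permutation is moved up. -/
lemma exists_first_moved {τ : Equiv.Perm (Fin n)} (hτ : τ ≠ 1) :
    ∃ i, i < τ i ∧ ∀ j < i, τ j = j := by
  have hne : ∃ i, τ i ≠ i := by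
    by_contra! hc
    exact hτ (Equiv.ext hc)
  obtain ⟨i, hi, hmin⟩ := WellFounded.has_min (wellFounded_lt (α := Fin n)) {i | τ i ≠ i} hne
  have hfix : ∀ j < i, τ j = j := fun j hj => by
    by_contra hc
    exact hmin j hc hj
  exact ⟨i, lt_of_le_of_ne (le_of_not_gt fun hlt => hi (τ.injective (hfix _ hlt))) (Ne.symm hi),
    hfix⟩

lemma toLex_lt_mul {π τ : Equiv.Perm (Fin n)} (hτ : τ ≠ 1)
    (h : ∀ i, i < τ i → π i < π (τ i)) : toLex (⇑π) < toLex (⇑(π * τ)) := by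
  obtain ⟨i, hi, hfix⟩ := exists_first_moved hτ
  exact ⟨i, fun j hj => by simp [hfix j hj], h i hi⟩

lemma toLex_mul_lt {π τ : Equiv.Perm (Fin n)} (hτ : τ ≠ 1)
    (h : ∀ i, i < τ i → π (τ i) < π i) : toLex (⇑(π * τ)) < toLex (⇑π) := by
  obtain ⟨i, hi, hfix⟩ := exists_first_moved hτ
  exact ⟨i, fun j hj => by simp [hfix j hj], h i hi⟩

/-- A permutation whose decreasing subsequences have length at most `l` is a union of `l`
increasing subsequences. -/
lemma decLE.exists_coloring {l : ℕ} {π : Equiv.Perm (Fin n)} (hπ : decLE π l) :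
    ∃ c : Fin n → Fin l, ∀ i j, i < j → c i = c j → π i < π j := by
  classical
  let P : Fin n → ℕ → Prop := fun i k =>
    ∃ f : Fin (k + 1) → Fin n, StrictMono f ∧ StrictAnti (fun a => π (f a)) ∧ f 0 = i
  have hP0 : ∀ i, P i 0 := fun i =>
    ⟨fun _ => i, fun a b h => absurd h (by omega), fun a b h => absurd h (by omega), rfl⟩
  have hlt : ∀ i k, P i k → k < l := fun i k ⟨f, h1, h2, _⟩ => hπ (k + 1) f h1 h2
  have hspec : ∀ i, P i (Nat.findGreatest (P i) l) := fun i =>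
    Nat.findGreatest_spec (Nat.zero_le l) (hP0 i)
  refine ⟨fun i => ⟨_, hlt i _ (hspec i)⟩, fun i j hij hc => ?_⟩
  by_contra hle
  have hji : π j < π i := lt_of_le_of_ne (not_lt.mp hle) fun h => hij.ne (π.injective h).symm
  obtain ⟨f, h1, h2, h3⟩ := hspec j
  have hnext : P i (Nat.findGreatest (P j) l + 1) := by
    refine ⟨Matrix.vecCons i f, ?_, ?_, rfl⟩
    · rw [strictMono_vecCons]
      exact ⟨by rw [h3]; exact hij, h1⟩
    · have : (fun a => π (Matrix.vecCons i f a)) = Matrix.vecCons (π i) (fun a => π (f a)) := by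
        funext a
        refine Fin.cases ?_ (fun b => ?_) a <;> simp
      rw [this, strictAnti_vecCons]
      exact ⟨by rw [h3]; exact hji, h2⟩
  have hge := Nat.le_findGreatest (hlt i _ hnext).le hnext
  have heq : Nat.findGreatest (P i) l = Nat.findGreatest (P j) l := congrArg Fin.val hc
  omega

end Lex

lemma linearIndependent_permMatrix (n l : ℕ) :
    LinearIndependent ℂ
      (fun π : {π : Equiv.Perm (Fin n) // decLE π l} => permMatrix l π.1) := by
  classical
  rw [Fintype.linearIndependent_iff]
  intro g hg
  let r : {π : Equiv.Perm (Fin n) // decLE π l} → Lex (Fin n → Fin n) := fun π => toLex ⇑π.1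
  intro π
  induction π using (InvImage.wf r wellFounded_gt).induction with
  | _ π ih =>
  obtain ⟨c, hc⟩ := π.2.exists_coloring
  have hentry := congrFun (congrFun hg c) (c ∘ ⇑π.1⁻¹)
  simp only [Matrix.sum_apply, Matrix.smul_apply, permMatrix, Matrix.of_apply,
    Matrix.zero_apply, smul_eq_mul, mul_ite, mul_one, mul_zero] at hentry
  rw [Finset.sum_eq_single π] at hentry
  · rwa [if_pos] at hentry
    funext i
    simp
  · intro σ _ hσ
    split_ifs with hcσ
    · refine ih σ ?_
      have hmul : σ.1 = π.1 * (π.1⁻¹ * σ.1) := by simp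
      change toLex ⇑π.1 < toLex ⇑σ.1
      rw [hmul]
      refine toLex_lt_mul (fun h1 => hσ (Subtype.ext (inv_mul_eq_one.mp h1).symm)) fun i hi => ?_
      exact hc _ _ hi (congrFun hcσ i)
    · rfl
  · simp

lemma sum_sign_smul_permMatrix {n l k : ℕ} (hk : l < k) (π : Equiv.Perm (Fin n))
    {f : Fin k → Fin n} (hf : Function.Injective f) :
    ∑ τ : Equiv.Perm (Fin n) with ∀ j, j ∉ Set.range f → τ j = j,
      ((Equiv.Perm.sign τ : ℤ) : ℂ) • permMatrix l (π * τ) = 0 := by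
  ext w v
  simp only [Matrix.sum_apply, Matrix.smul_apply, permMatrix, Matrix.of_apply,
    Matrix.zero_apply, smul_eq_mul]
  obtain ⟨a, b, hab, hv⟩ := Fintype.exists_ne_map_eq_of_card_lt (fun a => v (π (f a)))
    (by simpa using hk)
  have hfab : f a ≠ f b := hf.ne hab
  have hswap : ∀ x, v (π (Equiv.swap (f a) (f b) x)) = v (π x) := fun x => by
    rcases eq_or_ne x (f a) with rfl | ha
    · simpa using hv.symm
    rcases eq_or_ne x (f b) with rfl | hb
    · simpa using hv
    rw [Equiv.swap_apply_of_ne_of_ne ha hb]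
  refine Finset.sum_involution (fun τ _ => Equiv.swap (f a) (f b) * τ) ?_ ?_ ?_ ?_
  · intro τ _
    have : v ∘ ⇑(π * (Equiv.swap (f a) (f b) * τ)) = v ∘ ⇑(π * τ) := funext fun x => hswap _
    rw [this]
    simp [Equiv.Perm.sign_swap hfab]
  · intro τ _ _ h
    exact hfab (Equiv.swap_eq_one_iff.mp (mul_eq_right.mp h))
  · intro τ hτ
    simp only [Finset.mem_filter, Finset.mem_univ, true_and] at hτ ⊢
    intro j hj
    rw [Equiv.Perm.mul_apply, hτ j hj]
    exact Equiv.swap_apply_of_ne_of_ne (fun h => hj ⟨a, h.symm⟩) (fun h => hj ⟨b, h.symm⟩)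
  · intro τ _
    simp [← mul_assoc]

lemma permMatrix_mem_span_decLE {n : ℕ} (l : ℕ) (π : Equiv.Perm (Fin n)) :
    permMatrix l π ∈ Submodule.span ℂ
      (Set.range fun σ : {σ : Equiv.Perm (Fin n) // decLE σ l} => permMatrix l σ.1) := by
  classical
  let r : Equiv.Perm (Fin n) → Lex (Fin n → Fin n) := fun π => toLex ⇑π
  induction π using (InvImage.wf r wellFounded_lt).induction with
  | _ π ih =>
  by_cases hπ : decLE π l
  · exact Submodule.subset_span ⟨⟨π, hπ⟩, rfl⟩
  simp only [decLE, not_forall, not_le] at hπ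
  obtain ⟨k, f, hf, hanti, hk⟩ := hπ
  have hsum := sum_sign_smul_permMatrix hk π hf.injective
  rw [← Finset.add_sum_erase _ _ (a := 1) (by simp)] at hsum
  simp only [Equiv.Perm.sign_one, Units.val_one, Int.cast_one, one_smul, mul_one] at hsum
  rw [eq_neg_of_add_eq_zero_left hsum]
  refine Submodule.neg_mem _ (Submodule.sum_mem _ fun τ hτ => Submodule.smul_mem _ _ (ih _ ?_))
  simp only [Finset.mem_erase, Finset.mem_filter, Finset.mem_univ, true_and] at hτ
  refine toLex_mul_lt hτ.1 fun i hi => ?_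
  have hrange : ∀ j, τ j ≠ j → j ∈ Set.range f := fun j hj => by
    by_contra hc
    exact hj (hτ.2 j hc)
  obtain ⟨a, rfl⟩ := hrange i hi.ne'
  obtain ⟨b, hb⟩ := hrange (τ (f a)) fun h => hi.ne' (τ.injective h)
  rw [← hb] at hi ⊢
  exact hanti (hf.lt_iff_lt.mp hi)

section Commutant

variable {n l : ℕ}

lemma permMatrix_mul_apply (π : Equiv.Perm (Fin n))
    (X : Matrix (Fin n → Fin l) (Fin n → Fin l) ℂ) (w v : Fin n → Fin l) :
    (permMatrix l π * X) w v = X (w ∘ ⇑π⁻¹) v := by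
  have h : ∀ x : Fin n → Fin l, w = x ∘ π ↔ x = w ∘ ⇑π⁻¹ := fun x =>
    ⟨fun h => by rw [h]; funext i; simp, fun h => by rw [h]; funext i; simp⟩
  simp [Matrix.mul_apply, permMatrix, h]

lemma mul_permMatrix_apply (π : Equiv.Perm (Fin n))
    (X : Matrix (Fin n → Fin l) (Fin n → Fin l) ℂ) (w v : Fin n → Fin l) :
    (X * permMatrix l π) w v = X w (v ∘ π) := by
  simp [Matrix.mul_apply, permMatrix]

lemma permMatrix_mul (π σ : Equiv.Perm (Fin n)) :
    permMatrix l π * permMatrix l σ = permMatrix l (σ * π) := by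
  ext w v
  rw [mul_permMatrix_apply]
  rfl

lemma permMatrix_one : permMatrix l (1 : Equiv.Perm (Fin n)) = 1 := by
  ext w v
  simp [permMatrix, Matrix.one_apply]

/-- The double commutant theorem for the action of the symmetric group on words. -/
lemma mem_span_permMatrix_of_commute {A : Matrix (Fin n → Fin l) (Fin n → Fin l) ℂ}
    (hA : ∀ X : Matrix (Fin n → Fin l) (Fin n → Fin l) ℂ,
      (∀ π, Commute (permMatrix l π) X) → Commute A X) :
    A ∈ Submodule.span ℂ (Set.range (permMatrix (n := n) l)) := by
  classical
  set B := Submodule.span ℂ (Set.range (permMatrix (n := n) l)) with hB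
  obtain ⟨p, hp⟩ := B.subtype.exists_leftInverse_of_injective B.ker_subtype
  have hmulB : ∀ π, ∀ X ∈ B, permMatrix l π * X ∈ B := by
    intro π X hX
    induction hX using Submodule.span_induction with
    | mem x hx =>
      obtain ⟨σ, rfl⟩ := hx
      exact Submodule.subset_span ⟨σ * π, (permMatrix_mul π σ).symm⟩
    | zero => simp
    | add x y _ _ hx hy => rw [mul_add]; exact B.add_mem hx hy
    | smul c x _ hx => rw [mul_smul_comm]; exact B.smul_mem c hx
  let P : Matrix (Fin n → Fin l) (Fin n → Fin l) ℂ →ₗ[ℂ]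
      Matrix (Fin n → Fin l) (Fin n → Fin l) ℂ :=
    ∑ π : Equiv.Perm (Fin n), LinearMap.mulLeft ℂ (permMatrix l π) ∘ₗ B.subtype ∘ₗ p ∘ₗ
      LinearMap.mulLeft ℂ (permMatrix l π⁻¹)
  have hP : ∀ X, P X = ∑ π, permMatrix l π * (p (permMatrix l π⁻¹ * X) : Matrix _ _ ℂ) :=
    fun X => by simp [P]
  have hPmem : ∀ X, P X ∈ B := fun X => by
    rw [hP]
    exact Submodule.sum_mem _ fun π _ => hmulB π _ (Subtype.property _)
  have hPone : P 1 = (n.factorial : ℂ) • 1 := by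
    have hterm : ∀ π : Equiv.Perm (Fin n),
        permMatrix l π * (p (permMatrix l π⁻¹ * 1) : Matrix _ _ ℂ) = 1 := fun π => by
      have := LinearMap.congr_fun hp ⟨permMatrix l π⁻¹, Submodule.subset_span ⟨_, rfl⟩⟩
      simp only [LinearMap.comp_apply, Submodule.subtype_apply, LinearMap.id_apply] at this
      rw [mul_one, this, permMatrix_mul, inv_mul_cancel, permMatrix_one]
    rw [hP, Finset.sum_congr rfl fun π _ => hterm π]
    simp [Fintype.card_perm, ← Nat.cast_smul_eq_nsmul ℂ]
  have hPmul : ∀ σ X, P (permMatrix l σ * X) = permMatrix l σ * P X := by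
    intro σ X
    rw [hP, hP, Finset.mul_sum]
    refine Fintype.sum_equiv (Equiv.mulRight σ⁻¹) _ _ fun π => ?_
    simp only [← mul_assoc, permMatrix_mul, Equiv.coe_mulRight, mul_inv_rev, inv_inv,
      inv_mul_cancel_right]
  have hcomm : ∀ X, P (A * X) = A * P X := by
    intro X
    have hlin : P ∘ₗ LinearMap.mulLeft ℂ A = LinearMap.mulLeft ℂ A ∘ₗ P := by
      refine (Matrix.stdBasis ℂ _ _).ext fun ⟨v, u⟩ => ?_
      simp only [LinearMap.comp_apply, LinearMap.mulLeft_apply, Matrix.stdBasis_eq_single]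
      ext w u'
      let Y : Matrix (Fin n → Fin l) (Fin n → Fin l) ℂ :=
        Matrix.of fun x y => P (Matrix.single y u 1) x u'
      have hY : ∀ σ, Commute (permMatrix l σ) Y := by
        intro σ
        ext x y
        rw [permMatrix_mul_apply, mul_permMatrix_apply]
        simp only [Y, Matrix.of_apply]
        have hcol : permMatrix l σ * Matrix.single y u (1 : ℂ) =
            Matrix.single (y ∘ σ) u 1 := by
          ext a b
          rw [permMatrix_mul_apply]
          have h : y = a ∘ ⇑σ⁻¹ ↔ y ∘ σ = a :=
            ⟨fun h => by rw [h]; funext i; simp, fun h => by rw [← h]; funext i; simp⟩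
          simp only [Matrix.single_apply, h]
        rw [← hcol, hPmul, permMatrix_mul_apply]
      have hAY := congrFun (congrFun (hA Y hY) w) v
      have hsum : A * Matrix.single v u 1 = ∑ x, A x v • Matrix.single x u (1 : ℂ) := by
        ext a b
        rw [Matrix.sum_apply]
        by_cases hb : u = b <;> simp [Matrix.mul_apply, Matrix.single_apply, hb]
      rw [hsum, map_sum, Matrix.sum_apply]
      simp only [map_smul, Matrix.smul_apply, smul_eq_mul]
      simp only [Matrix.mul_apply, Y, Matrix.of_apply] at hAY ⊢
      rw [hAY]
      exact Finset.sum_congr rfl fun x _ => mul_comm _ _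
    exact LinearMap.congr_fun hlin X
  have hfac : (n.factorial : ℂ) ≠ 0 := Nat.cast_ne_zero.mpr n.factorial_ne_zero
  have hfin : A = (n.factorial : ℂ)⁻¹ • P A := by
    have h1 := hcomm 1
    rw [mul_one, hPone, mul_smul_comm, mul_one] at h1
    rw [h1, inv_smul_smul₀ hfac]
  rw [hfin]
  exact B.smul_mem _ (hPmem A)

/-- The Kronecker product of a family of matrices, indexed by words. -/
def kroneckerFamily (n l : ℕ) : MultilinearMap ℂ (fun _ : Fin n => Matrix (Fin l) (Fin l) ℂ)
    (Matrix (Fin n → Fin l) (Fin n → Fin l) ℂ) :=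
  MultilinearMap.pi fun w => MultilinearMap.pi fun v =>
    (MultilinearMap.mkPiAlgebra ℂ (Fin n) ℂ).compLinearMap fun i =>
      Matrix.entryLinearMap ℂ ℂ (w i) (v i)

lemma kroneckerFamily_apply (M : Fin n → Matrix (Fin l) (Fin l) ℂ) (w v : Fin n → Fin l) :
    kroneckerFamily n l M w v = ∏ i, M i (w i) (v i) := by
  rfl

lemma kroneckerFamily_mul (M N : Fin n → Matrix (Fin l) (Fin l) ℂ) :
    kroneckerFamily n l M * kroneckerFamily n l N = kroneckerFamily n l fun i => M i * N i := by
  ext w v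
  simp only [Matrix.mul_apply, kroneckerFamily_apply, Fintype.prod_sum, Finset.prod_mul_distrib]

lemma kroneckerFamily_diagonal_apply (d : Fin l → ℂ) (w v : Fin n → Fin l) :
    kroneckerFamily n l (fun _ => Matrix.diagonal d) w v = if w = v then ∏ i, d (v i) else 0 := by
  rw [kroneckerFamily_apply]
  split_ifs with h
  · simp [h]
  · obtain ⟨i, hi⟩ := Function.ne_iff.mp h
    exact Finset.prod_eq_zero (Finset.mem_univ i) (Matrix.diagonal_apply_ne _ hi)

lemma kroneckerFamily_single (w v : Fin n → Fin l) :
    kroneckerFamily n l (fun i => Matrix.single (w i) (v i) 1) = Matrix.single w v 1 := by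
  ext a b
  rw [kroneckerFamily_apply]
  simp only [Matrix.single_apply, Fintype.prod_ite_zero, Finset.prod_const_one, funext_iff,
    forall_and]

/-- Polarization: a multilinear map vanishing on the diagonal of an additive submonoid has
vanishing symmetrization there. -/
lemma MultilinearMap.sum_perm_eq_zero_of_diagonal {E F : Type*} [AddCommGroup E] [Module ℂ E]
    [AddCommGroup F] [Module ℂ F] (f : MultilinearMap ℂ (fun _ : Fin n => E) F)
    (S : AddSubgroup E) (hf : ∀ x ∈ S, f (fun _ => x) = 0) {x : Fin n → E} (hx : ∀ i, x i ∈ S) :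
    ∑ σ : Equiv.Perm (Fin n), f (fun i => x (σ i)) = 0 := by
  classical
  have hcoef : ∀ r : Fin n → Fin n,
      ∑ s : Finset (Fin n), (∏ j ∈ sᶜ, (-1 : ℂ)) * (if ∀ i, r i ∈ s then 1 else 0) =
        if Function.Bijective r then 1 else 0 := by
    intro r
    have h := Fintype.prod_add (fun _ => (1 : ℂ))
      fun j => -1 * if j ∈ Set.range r then (0 : ℂ) else 1
    have hprod : ∏ j, ((1 : ℂ) + -1 * if j ∈ Set.range r then (0 : ℂ) else 1) =
        if Function.Bijective r then 1 else 0 := by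
      split_ifs with hr <;> rw [← Finite.surjective_iff_bijective] at hr
      · exact Finset.prod_eq_one fun j _ => by simp [show j ∈ Set.range r from hr j]
      · rw [Function.Surjective, not_forall] at hr
        obtain ⟨j, hj⟩ := hr
        exact Finset.prod_eq_zero (Finset.mem_univ j) (by rw [if_neg (show j ∉ Set.range r from hj)]; norm_num)
    rw [← hprod, h]
    refine Finset.sum_congr rfl fun s _ => ?_
    rw [Finset.prod_const_one, one_mul, Finset.prod_mul_distrib]
    congr 1
    split_ifs with hr
    · refine (Finset.prod_eq_one fun j hj => ?_).symm
      rw [if_neg]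
      rintro ⟨i, rfl⟩
      exact Finset.mem_compl.mp hj (hr i)
    · obtain ⟨i, hi⟩ := not_forall.mp hr
      symm
      exact Finset.prod_eq_zero (i := r i) (Finset.mem_compl.mpr hi) (if_pos ⟨i, rfl⟩)
  have hexpand : ∀ s : Finset (Fin n), f (fun _ => ∑ j ∈ s, x j) =
      ∑ r : Fin n → Fin n, (if ∀ i, r i ∈ s then (1 : ℂ) else 0) • f fun i => x (r i) := by
    intro s
    rw [f.map_sum_finset (fun _ j => x j) fun _ => s]
    simp only [ite_smul, one_smul, zero_smul]
    rw [← Finset.sum_filter]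
    exact Finset.sum_congr (by ext r; simp) fun _ _ => rfl
  have hzero : ∑ s : Finset (Fin n), (∏ j ∈ sᶜ, (-1 : ℂ)) • f (fun _ => ∑ j ∈ s, x j) = 0 :=
    Finset.sum_eq_zero fun s _ => by rw [hf _ (S.sum_mem fun i _ => hx i), smul_zero]
  simp only [hexpand, Finset.smul_sum, smul_smul] at hzero
  rw [Finset.sum_comm] at hzero
  simp only [← Finset.sum_smul, hcoef, ite_smul, one_smul, zero_smul] at hzero
  rw [← Finset.sum_filter] at hzero
  rw [← hzero]
  exact (Finset.sum_bij (fun r hr => Equiv.ofBijective r (Finset.mem_filter.mp hr).2)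
    (fun _ _ => Finset.mem_univ _) (fun _ _ _ _ h => congrArg DFunLike.coe h)
    (fun σ _ => ⟨σ, Finset.mem_filter.mpr ⟨Finset.mem_univ _, σ.bijective⟩, Equiv.ext fun _ => rfl⟩) fun _ _ => rfl).symm

lemma MultilinearMap.sum_perm_eq_zero_of_span {E F : Type*} [AddCommGroup E] [Module ℂ E]
    [AddCommGroup F] [Module ℂ F] (f : MultilinearMap ℂ (fun _ : Fin n => E) F)
    (S : AddSubgroup E) (hS : Submodule.span ℂ (S : Set E) = ⊤)
    (hf : ∀ x ∈ S, f (fun _ => x) = 0) (x : Fin n → E) :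
    ∑ σ : Equiv.Perm (Fin n), f (fun i => x (σ i)) = 0 := by
  have hspan : ∀ _ : Fin n, Submodule.span ℂ (Set.range ((↑) : S → E)) = ⊤ :=
    fun _ => by rw [Subtype.range_coe]; exact hS
  have hsymm : ∑ σ : Equiv.Perm (Fin n), f.domDomCongr σ = 0 := by
    refine MultilinearMap.ext_of_span_eq_top hspan fun N => ?_
    simpa using f.sum_perm_eq_zero_of_diagonal S hf (x := fun i => N i) fun i => (N i).2
  simpa using congrArg (fun g => g x) hsymm

lemma commute_kroneckerFamily_diagonal {A : Matrix (Fin n → Fin l) (Fin n → Fin l) ℂ}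
    (hA : ∀ U ∈ Matrix.unitaryGroup (Fin l) ℂ, Commute A (kroneckerFamily n l fun _ => U))
    (d : Fin l → ℂ) :
    Commute A (kroneckerFamily n l fun _ => Matrix.diagonal d) := by
  classical
  have hentry : ∀ (e : Fin l → ℂ) (w v : Fin n → Fin l),
      (A * kroneckerFamily n l (fun _ => Matrix.diagonal e)) w v = A w v * ∏ i, e (v i) ∧
      (kroneckerFamily n l (fun _ => Matrix.diagonal e) * A) w v = (∏ i, e (w i)) * A w v := by
    intro e w v
    simp [Matrix.mul_apply, kroneckerFamily_diagonal_apply]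
  ext w v
  rw [(hentry d w v).1, (hentry d w v).2, mul_comm]
  rcases eq_or_ne (A w v) 0 with h0 | h0
  · simp [h0]
  congr 1
  have hcard : ∀ j, (Finset.univ.filter fun i => v i = j).card =
      (Finset.univ.filter fun i => w i = j).card := by
    intro j
    obtain ⟨ζ, hζ⟩ : ∃ ζ : ℂ, IsPrimitiveRoot ζ (n + 1) :=
      ⟨_, Complex.isPrimitiveRoot_exp (n + 1) n.succ_ne_zero⟩
    let e : Fin l → ℂ := fun k => if k = j then ζ else 1
    have hζ1 : star ζ * ζ = 1 := by
      rw [Complex.star_def, Complex.conj_mul', hζ.norm'_eq_one n.succ_ne_zero]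
      simp
    have he : Matrix.diagonal e ∈ Matrix.unitaryGroup (Fin l) ℂ := by
      rw [Matrix.mem_unitaryGroup_iff', Matrix.star_eq_conjTranspose,
        Matrix.diagonal_conjTranspose, Matrix.diagonal_mul_diagonal, ← Matrix.diagonal_one]
      congr 1
      funext k
      by_cases hk : k = j
      · simpa [e, hk] using hζ1
      · simp [e, hk]
    have h := congrFun (congrFun (hA _ he) w) v
    rw [(hentry e w v).1, (hentry e w v).2, mul_comm] at h
    have h' := mul_right_cancel₀ h0 h
    simp only [e, Finset.prod_ite, Finset.prod_const, one_pow, mul_one] at h'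
    refine hζ.pow_inj ?_ ?_ h' <;>
      exact Nat.lt_succ_of_le ((Finset.card_le_univ _).trans_eq (Fintype.card_fin n))
  rw [← Finset.prod_fiberwise' _ v d, ← Finset.prod_fiberwise' _ w d]
  simp [hcard]

lemma commute_kroneckerFamily_of_isHermitian {A : Matrix (Fin n → Fin l) (Fin n → Fin l) ℂ}
    (hA : ∀ U ∈ Matrix.unitaryGroup (Fin l) ℂ, Commute A (kroneckerFamily n l fun _ => U))
    {H : Matrix (Fin l) (Fin l) ℂ}
    (hH : H.IsHermitian) : Commute A (kroneckerFamily n l fun _ => H) := by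
  rw [hH.spectral_theorem, Unitary.conjStarAlgAut_apply, ← kroneckerFamily_mul,
    ← kroneckerFamily_mul]
  exact ((hA _ (Subtype.property _)).mul_right (commute_kroneckerFamily_diagonal hA _)).mul_right
    (hA _ (Subtype.property (star hH.eigenvectorUnitary)))

lemma commute_sum_perm_kroneckerFamily {A : Matrix (Fin n → Fin l) (Fin n → Fin l) ℂ}
    (hA : ∀ U ∈ Matrix.unitaryGroup (Fin l) ℂ, Commute A (kroneckerFamily n l fun _ => U))
    (M : Fin n → Matrix (Fin l) (Fin l) ℂ) :
    Commute A (∑ σ : Equiv.Perm (Fin n), kroneckerFamily n l fun i => M (σ i)) := by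
  have h := ((LinearMap.mulLeft ℂ A - LinearMap.mulRight ℂ A).compMultilinearMap
    (kroneckerFamily n l)).sum_perm_eq_zero_of_span (selfAdjoint _) span_selfAdjoint
    (fun H hH => sub_eq_zero.mpr (commute_kroneckerFamily_of_isHermitian hA hH).eq) M
  simp only [LinearMap.compMultilinearMap_apply, LinearMap.sub_apply, LinearMap.mulLeft_apply,
    LinearMap.mulRight_apply, Finset.sum_sub_distrib, ← Finset.mul_sum, ← Finset.sum_mul] at h
  exact sub_eq_zero.mp h

lemma commute_of_forall_commute_permMatrix {A : Matrix (Fin n → Fin l) (Fin n → Fin l) ℂ}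
    (hA : ∀ U ∈ Matrix.unitaryGroup (Fin l) ℂ, Commute A (kroneckerFamily n l fun _ => U))
    {X : Matrix (Fin n → Fin l) (Fin n → Fin l) ℂ}
    (hX : ∀ π, Commute (permMatrix l π) X) : Commute A X := by
  classical
  have hterm : ∀ σ : Equiv.Perm (Fin n),
      ∑ w, ∑ v, X w v • Matrix.single (w ∘ σ) (v ∘ σ) (1 : ℂ) = X := by
    intro σ
    ext a b
    have hiff : ∀ x y : Fin n → Fin l, x ∘ σ = y ↔ x = y ∘ ⇑σ⁻¹ := fun x y =>
      ⟨fun h => by rw [← h]; funext i; simp, fun h => by rw [h]; funext i; simp⟩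
    have h := congrFun (congrFun (hX σ) a) (b ∘ ⇑σ⁻¹)
    rw [permMatrix_mul_apply, mul_permMatrix_apply] at h
    have hb : (b ∘ ⇑σ⁻¹) ∘ σ = b := by funext i; simp
    rw [hb] at h
    simp only [Matrix.sum_apply, Matrix.smul_apply, Matrix.single_apply, hiff, ite_and, smul_eq_mul,
      mul_ite, mul_one, mul_zero, Finset.sum_ite_eq', Finset.mem_univ, if_true,
      Finset.sum_ite_irrel, Finset.sum_const_zero, h]
  have hfac : (n.factorial : ℂ) ≠ 0 := Nat.cast_ne_zero.mpr n.factorial_ne_zero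
  have hsum : X = (n.factorial : ℂ)⁻¹ • ∑ w, ∑ v, X w v •
      ∑ σ : Equiv.Perm (Fin n), kroneckerFamily n l
        fun i => Matrix.single (w (σ i)) (v (σ i)) (1 : ℂ) := by
    have h : ∑ σ : Equiv.Perm (Fin n),
        ∑ w, ∑ v, X w v • Matrix.single (w ∘ σ) (v ∘ σ) (1 : ℂ) = (n.factorial : ℂ) • X := by
      rw [Finset.sum_congr rfl fun σ _ => hterm σ]
      simp [Fintype.card_perm, ← Nat.cast_smul_eq_nsmul ℂ]
    rw [eq_inv_smul_iff₀ hfac, ← h, Finset.sum_comm]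
    refine Finset.sum_congr rfl fun w _ => ?_
    rw [Finset.sum_comm]
    refine Finset.sum_congr rfl fun v _ => ?_
    rw [Finset.smul_sum]
    exact Finset.sum_congr rfl fun σ _ =>
      congrArg _ (kroneckerFamily_single (w ∘ σ) (v ∘ σ)).symm
  rw [hsum]
  refine Commute.smul_right ?_ _
  refine Commute.sum_right _ _ _ fun w _ => Commute.sum_right _ _ _ fun v _ => ?_
  refine Commute.smul_right ?_ _
  exact commute_sum_perm_kroneckerFamily hA fun i => Matrix.single (w i) (v i) 1

lemma commute_permMatrix_kroneckerFamily (π : Equiv.Perm (Fin n))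
    (M : Matrix (Fin l) (Fin l) ℂ) :
    Commute (permMatrix l π) (kroneckerFamily n l fun _ => M) := by
  ext w v
  rw [permMatrix_mul_apply, mul_permMatrix_apply, kroneckerFamily_apply, kroneckerFamily_apply]
  exact Fintype.prod_equiv π⁻¹ _ _ fun i => by simp

lemma mem_span_permMatrix_iff {A : Matrix (Fin n → Fin l) (Fin n → Fin l) ℂ} :
    A ∈ Submodule.span ℂ
        (Set.range fun σ : {σ : Equiv.Perm (Fin n) // decLE σ l} => permMatrix l σ.1) ↔
      ∀ U ∈ Matrix.unitaryGroup (Fin l) ℂ, Commute A (kroneckerFamily n l fun _ => U) := by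
  refine ⟨fun h U _ => ?_, fun h => ?_⟩
  · induction h using Submodule.span_induction with
    | mem x hx =>
      obtain ⟨σ, rfl⟩ := hx
      exact commute_permMatrix_kroneckerFamily _ U
    | zero => exact Commute.zero_left _
    | add x y _ _ hx hy => exact hx.add_left hy
    | smul c x _ hx => exact hx.smul_left c
  · refine Submodule.span_le.mpr ?_ (mem_span_permMatrix_of_commute fun X hX =>
      commute_of_forall_commute_permMatrix h hX)
    rintro _ ⟨π, rfl⟩
    exact permMatrix_mem_span_decLE l π

end Commutant

section TensorPower

variable {n l : ℕ}

/-- Matrices of endomorphisms of the tensor power in the standard basis, indexed by words. -/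
def tensorMatrixEquiv (n l : ℕ) : Module.End ℂ (⨂[ℂ] _ : Fin n, (Fin l → ℂ)) ≃ₐ[ℂ]
    Matrix (Fin n → Fin l) (Fin n → Fin l) ℂ :=
  LinearMap.toMatrixAlgEquiv (Basis.piTensorProduct fun _ : Fin n => Pi.basisFun ℂ (Fin l))

lemma tensorMatrixEquiv_perm {π : Equiv.Perm (Fin n)}
    {T : Module.End ℂ (⨂[ℂ] _ : Fin n, (Fin l → ℂ))}
    (hT : ∀ v : Fin n → (Fin l → ℂ),
      T (PiTensorProduct.tprod ℂ v) = PiTensorProduct.tprod ℂ (fun i => v (π i))) :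
    tensorMatrixEquiv n l T = permMatrix l π := by
  classical
  ext w v
  rw [tensorMatrixEquiv, LinearMap.toMatrixAlgEquiv_apply, Basis.piTensorProduct_apply, hT,
    Basis.piTensorProduct_repr_tprod_apply]
  simp [permMatrix, Pi.single_apply, Fintype.prod_ite_zero, funext_iff]

lemma tensorMatrixEquiv_tpow (M : Matrix (Fin l) (Fin l) ℂ) :
    tensorMatrixEquiv n l (tpow n l M) = kroneckerFamily n l fun _ => M := by
  ext w v
  rw [tensorMatrixEquiv, LinearMap.toMatrixAlgEquiv_apply, Basis.piTensorProduct_apply, tpow,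
    PiTensorProduct.map_tprod, Basis.piTensorProduct_repr_tprod_apply, kroneckerFamily_apply]
  simp

end TensorPower

/-- The family `{T_l(π) : π ∈ S_n, L⁻(π) ≤ l}` is a basis (linearly independent and
spanning) of the commutant `C_n(U(l)) = {A : A ∘ U^{⊗n} = U^{⊗n} ∘ A for all U ∈ U(l)}`,
where `T_l(π)(v₁⊗⋯⊗v_n) = v_{π(1)}⊗⋯⊗v_{π(n)}` and `L⁻(π)` is the length of the
longest strictly decreasing subsequence of `π`. -/
theorem Tl_basis_of_commutant (n l : ℕ)
    (T : Equiv.Perm (Fin n) → Module.End ℂ (⨂[ℂ] _ : Fin n, (Fin l → ℂ)))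
    (hT : ∀ (π : Equiv.Perm (Fin n)) (v : Fin n → (Fin l → ℂ)),
      T π (PiTensorProduct.tprod ℂ v) = PiTensorProduct.tprod ℂ (fun i => v (π i))) :
    LinearIndependent ℂ
      (fun π : {π : Equiv.Perm (Fin n) // decLE π l} => T π.1) ∧
    (Submodule.span ℂ
        (Set.range (fun π : {π : Equiv.Perm (Fin n) // decLE π l} => T π.1)) :
      Set (Module.End ℂ (⨂[ℂ] _ : Fin n, (Fin l → ℂ)))) =
      {A | ∀ U : Matrix.unitaryGroup (Fin l) ℂ,
        A * tpow n l (U : Matrix (Fin l) (Fin l) ℂ) =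
          tpow n l (U : Matrix (Fin l) (Fin l) ℂ) * A} := by
  have hΦ : (fun π : {π : Equiv.Perm (Fin n) // decLE π l} => permMatrix l π.1) =
      (tensorMatrixEquiv n l).toLinearEquiv ∘ fun π => T π.1 :=
    funext fun π => (tensorMatrixEquiv_perm (hT π.1)).symm
  refine ⟨LinearIndependent.of_comp (tensorMatrixEquiv n l).toLinearMap ?_, ?_⟩
  · exact hΦ ▸ linearIndependent_permMatrix n l
  · ext A
    have hmem := mem_span_permMatrix_iff (A := tensorMatrixEquiv n l A)
    rw [hΦ, Set.range_comp, ← LinearEquiv.coe_coe, ← Submodule.map_span] at hmem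
    rw [SetLike.mem_coe, Set.mem_ofPred_eq]
    refine Iff.trans ⟨Submodule.mem_map_of_mem, fun h => ?_⟩ (hmem.trans ?_)
    · obtain ⟨B, hB, hBA⟩ := h
      rwa [← (tensorMatrixEquiv n l).injective hBA]
    · simp only [Subtype.forall, ← tensorMatrixEquiv_tpow, Commute, SemiconjBy, ← map_mul,
        EmbeddingLike.apply_eq_iff_eq]
end
end
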